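/- Let (λₖ) and (μₖ) be sequences of positive reals with λₖ → ∞ and μₖ/λₖ → ∞, and for each k let (uₖ, Nₖ) be a solution of the Maxwell–Chern–Simons vortex equations with parameters λₖ, μₖ. Suppose that inf_{x ∈ Ω ∖ Z} |uₖ(x)| → 0 as k → ∞. Then for every compact set K ⊂ ℝ² with K ∩ (Z + Λ) = ∅, one has sup_{x ∈ K} |uₖ(x)| → 0 as k → ∞. -/

import Mathlib

/-!
# Spreading of smallness for Maxwell–Chern–Simons vortices

Measure lengths in units of `1/λ` and put `w = -u`, `z = 1 - N/λ`, `κ = μ/λ`. The maximum principle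
on the torus gives `eᵘ ≤ 1` and `0 ≤ N ≤ λ`, so `w ≥ 0` and `0 ≤ z ≤ 1` (`bounds`), and the claim is
that `w` becomes uniformly small on compact sets once it is small somewhere.

The key quantity is `H = w + z/κ`, for which `ΔH = e^{-w} z ≥ 0`. The total integral of `ΔH`, the
energy, does not depend on the solution: the difference of the regular parts of two solutions with
the same vortices is smooth on the torus, and its Laplacian has integral zero (`energy_eq`).

*Local step* (`local_expand`). On a vortex-free disc of large rescaled radius `X`, suppose `w ≤ ε` at
the centre. A perturbation `Y` of `H` satisfies `ΔY ≤ Y`, so Gronwall's inequality for ball averages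
makes `w` small on a disc of fixed radius. The energy bound gives `H = O(log X)` on the disc of
radius `X/5`. A logarithmic barrier then shows that the bound `w ≤ 1` on a disc of radius at least a
fixed one deteriorates very little over a further distance `3`, while the decay lemma
(`LocSol.decay`), which uses the damping of `w` by the equation, more than makes up for it over a
distance `1`; so `w ≤ 1` on the disc of radius `X/10`. Iterating the decay lemma inwards a bounded
number of times yields `w ≤ ε` on the disc of radius `X/16`. The constant `ε` is not lost, so the step
can be repeated any number of times.

*Near a vortex* (`near_vortex`, `vortex_bound`). At bounded rescaled distance from a vortex, `w` is
bounded below by a positive constant. Hence points where `w` is small lie at distance much larger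
than `1/λ` from the vortices, which is the size of disc the local step requires.

*Globalization.* Almost-minimum points of `|u|` in the period cell converge along an ultrafilter. If
the limit is a vortex, a geometric chain of discs carries the smallness radially out to a fixed
circle (`radial_spread`). The complement of the singular set is connected, since that set is
countable, so chains of discs of fixed size then reach every compact set avoiding it
(`spread_compact`).
-/

open MeasureTheory Real Filter Metric Set

noncomputable section

/-- The plane `ℝ²`. -/
abbrev R2 : Type := EuclideanSpace ℝ (Fin 2)

/-- The Laplacian `Δf = ∂²f/∂x₁² + ∂²f/∂x₂²`. -/
def lap (f : R2 → ℝ) (x : R2) : ℝ :=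
  ∑ i : Fin 2,
    fderiv ℝ (fun y => fderiv ℝ f y (EuclideanSpace.single i 1)) x (EuclideanSpace.single i 1)

/-- The lattice `Λ = ℤa₁ + ℤa₂`. -/
def lattice (a1 a2 : R2) : Set R2 := {x | ∃ k l : ℤ, x = (k : ℝ) • a1 + (l : ℝ) • a2}

/-- The fundamental cell `Ω = {t₁a₁ + t₂a₂ : 0 < t₁, t₂ < 1}`. -/
def cell (a1 a2 : R2) : Set R2 :=
  {x | ∃ t1 t2 : ℝ, t1 ∈ Set.Ioo (0:ℝ) 1 ∧ t2 ∈ Set.Ioo (0:ℝ) 1 ∧ x = t1 • a1 + t2 • a2}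

/-- `Λ`-periodicity of a function on `ℝ²`. -/
def Periodic2 (a1 a2 : R2) (f : R2 → ℝ) : Prop :=
  ∀ x : R2, ∀ w ∈ lattice a1 a2, f (x + w) = f x

/-- The torus and vortex data: a lattice with fundamental cell of area 1, and distinct
vortex points `p₁, …, pₙ ∈ Ω` with positive multiplicities `m₁, …, mₙ`. -/
structure VortexData where
  a1 : R2
  a2 : R2
  indep : LinearIndependent ℝ ![a1, a2]
  area_one : volume (cell a1 a2) = 1
  n : ℕ
  p : Fin n → R2
  m : Fin n → ℕ
  m_pos : ∀ i, 0 < m i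
  p_mem : ∀ i, p i ∈ cell a1 a2
  p_inj : Function.Injective p

/-- The singular set `Z + Λ`. -/
def VortexData.sing (D : VortexData) : Set R2 :=
  {x | ∃ i : Fin D.n, ∃ w ∈ lattice D.a1 D.a2, x = D.p i + w}

/-- The total vortex number `𝔐 = Σᵢ mᵢ`. -/
def VortexData.M (D : VortexData) : ℝ := ∑ i, (D.m i : ℝ)

open Classical in
/-- `e^u`, extended continuously by the value `0` on `Z + Λ`. -/
def VortexData.expu (D : VortexData) (u : R2 → ℝ) (x : R2) : ℝ :=
  if x ∈ D.sing then 0 else Real.exp (u x)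

/-- `(u, N)` is a solution of the Maxwell–Chern–Simons vortex equations with
parameters `λ, μ`:  `u`, `N` are `Λ`-periodic, `u` is smooth away from `Z + Λ` with the
prescribed logarithmic behaviour `u(x) = 2mᵢ ln|x − pᵢ| + smooth` near each vortex point,
`N` is smooth, and the equations `Δu = λμ eᵘ − μN` (away from `Z + Λ`) and
`ΔN = μ(μ + λeᵘ)N − λμ(μ + λ)eᵘ` (everywhere, with `eᵘ` extended by `0` on `Z + Λ`)
hold pointwise. -/
def IsMCSSolution (D : VortexData) (lam mu : ℝ) (u N : R2 → ℝ) : Prop :=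
  Periodic2 D.a1 D.a2 u ∧ Periodic2 D.a1 D.a2 N ∧
  ContDiffOn ℝ (⊤ : ℕ∞) u D.singᶜ ∧ ContDiff ℝ (⊤ : ℕ∞) N ∧
  (∀ i : Fin D.n, ∃ ε > (0:ℝ), ∃ v : R2 → ℝ, ContDiffOn ℝ (⊤ : ℕ∞) v (Metric.ball (D.p i) ε) ∧
    ∀ x ∈ Metric.ball (D.p i) ε, x ≠ D.p i →
      u x = v x + 2 * (D.m i : ℝ) * Real.log ‖x - D.p i‖) ∧
  (∀ x ∉ D.sing, lap u x = lam * mu * Real.exp (u x) - mu * N x) ∧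
  (∀ x : R2, lap N x = mu * (mu + lam * D.expu u x) * N x - lam * mu * (mu + lam) * D.expu u x)

/-! ### The Laplacian and the maximum principle -/

/-- The `i`-th coordinate vector of `ℝ²`. -/
abbrev ee (i : Fin 2) : R2 := EuclideanSpace.single i 1

lemma lap_congr {f g : R2 → ℝ} {x : R2} (h : f =ᶠ[nhds x] g) : lap f x = lap g x := by
  unfold lap
  refine Finset.sum_congr rfl fun i _ => ?_
  have : (fun y => fderiv ℝ f y (ee i)) =ᶠ[nhds x] fun y => fderiv ℝ g y (ee i) := by
    filter_upwards [h.fderiv (𝕜 := ℝ)] with y hy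
    rw [hy]
  rw [this.fderiv_eq]

lemma differentiableAt_fderiv_apply {f : R2 → ℝ} {x : R2} (hf : ContDiffAt ℝ 2 f x) (v : R2) :
    DifferentiableAt ℝ (fun y => fderiv ℝ f y v) x := by
  have h : ContDiffAt ℝ 1 (fderiv ℝ f) x := hf.fderiv_right (by norm_num)
  exact (h.differentiableAt (by norm_num)).clm_apply (differentiableAt_const v)

lemma eventually_differentiableAt {f : R2 → ℝ} {x : R2} (hf : ContDiffAt ℝ 2 f x) :
    ∀ᶠ y in nhds x, DifferentiableAt ℝ f y := by
  filter_upwards [hf.eventually (by simp)] with y hy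
  exact hy.differentiableAt (by norm_num)

lemma lap_add {f g : R2 → ℝ} {x : R2} (hf : ContDiffAt ℝ 2 f x) (hg : ContDiffAt ℝ 2 g x) :
    lap (fun y => f y + g y) x = lap f x + lap g x := by
  unfold lap
  rw [← Finset.sum_add_distrib]
  refine Finset.sum_congr rfl fun i _ => ?_
  have : (fun y => fderiv ℝ (fun y => f y + g y) y (ee i)) =ᶠ[nhds x]
      fun y => fderiv ℝ f y (ee i) + fderiv ℝ g y (ee i) := by
    filter_upwards [eventually_differentiableAt hf, eventually_differentiableAt hg] with y h1 h2
    rw [fderiv_fun_add h1 h2]; rfl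
  rw [this.fderiv_eq, fderiv_fun_add (differentiableAt_fderiv_apply hf _)
    (differentiableAt_fderiv_apply hg _)]
  rfl

lemma lap_const_mul {f : R2 → ℝ} {x : R2} (c : ℝ) (hf : ContDiffAt ℝ 2 f x) :
    lap (fun y => c * f y) x = c * lap f x := by
  unfold lap
  rw [Finset.mul_sum]
  refine Finset.sum_congr rfl fun i _ => ?_
  have : (fun y => fderiv ℝ (fun y => c * f y) y (ee i)) =ᶠ[nhds x]
      fun y => c * fderiv ℝ f y (ee i) := by
    filter_upwards [eventually_differentiableAt hf] with y h1
    rw [fderiv_const_mul h1]; rfl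
  rw [this.fderiv_eq, fderiv_const_mul (differentiableAt_fderiv_apply hf _)]
  rfl

lemma lap_sub {f g : R2 → ℝ} {x : R2} (hf : ContDiffAt ℝ 2 f x) (hg : ContDiffAt ℝ 2 g x) :
    lap (fun y => f y - g y) x = lap f x - lap g x := by
  have h := lap_add hf (contDiffAt_const (c := (-1:ℝ)) |>.mul hg)
  rw [lap_const_mul (-1) hg] at h
  have e : (fun y => f y - g y) = fun y => f y + -1 * g y := by ext y; ring
  rw [e, h]; ring

lemma lap_const (c : ℝ) (x : R2) : lap (fun _ => c) x = 0 := by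
  simp [lap]

/-- The Laplacian of a radial function, written as a function of the squared radius. -/
lemma lap_radial {φ φ1 : ℝ → ℝ} {φ2 : ℝ} (p x : R2)
    (h1 : ∀ᶠ t in nhds (‖x - p‖ ^ 2), HasDerivAt φ (φ1 t) t)
    (h2 : HasDerivAt φ1 φ2 (‖x - p‖ ^ 2)) :
    lap (fun y => φ (‖y - p‖ ^ 2)) x = 4 * ‖x - p‖ ^ 2 * φ2 + 4 * φ1 (‖x - p‖ ^ 2) := by
  have hsq : ∀ y : R2, HasFDerivAt (fun y : R2 => ‖y - p‖ ^ 2) (2 • (innerSL ℝ (y - p))) y := by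
    intro y
    have := ((hasFDerivAt_id (𝕜 := ℝ) y).sub_const p).norm_sq
    simpa using this
  have hcont : Continuous fun y : R2 => ‖y - p‖ ^ 2 := by fun_prop
  have key : ∀ i : Fin 2, fderiv ℝ (fun y => fderiv ℝ (fun y => φ (‖y - p‖ ^ 2)) y (ee i)) x (ee i)
      = 4 * (x - p) i ^ 2 * φ2 + 2 * φ1 (‖x - p‖ ^ 2) := by
    intro i
    have e1 : (fun y => fderiv ℝ (fun y => φ (‖y - p‖ ^ 2)) y (ee i)) =ᶠ[nhds x]
        fun y => φ1 (‖y - p‖ ^ 2) * (2 * (y i - p i)) := by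
      filter_upwards [hcont.continuousAt.eventually h1] with y hy
      have h := (hy.comp_hasFDerivAt y (hsq y)).fderiv
      change fderiv ℝ (φ ∘ fun y : R2 => ‖y - p‖ ^ 2) y (ee i) = _
      rw [h]
      simp [ee, EuclideanSpace.inner_single_right]
    have h3 : HasFDerivAt (fun y : R2 => φ1 (‖y - p‖ ^ 2)) (φ2 • (2 • (innerSL ℝ (x - p)))) x :=
      h2.comp_hasFDerivAt x (hsq x)
    have h4 : HasFDerivAt (fun y : R2 => 2 * (y i - p i))
        ((2:ℝ) • (EuclideanSpace.proj i : R2 →L[ℝ] ℝ)) x := by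
      have := ((EuclideanSpace.proj i : R2 →L[ℝ] ℝ).hasFDerivAt (x := x)).sub_const (p i)
      exact this.const_mul 2
    have h5 := (h3.fun_mul h4).fderiv
    rw [e1.fderiv_eq, h5]
    simp [ee, EuclideanSpace.inner_single_right]
    ring
  unfold lap
  have hn : ‖x - p‖ ^ 2 = (x - p) 0 ^ 2 + (x - p) 1 ^ 2 := by
    rw [EuclideanSpace.norm_sq_eq]; simp
  rw [Fin.sum_univ_two, key 0, key 1, hn]
  ring

lemma contDiff_normSq (p : R2) {n : WithTop ℕ∞} : ContDiff ℝ n fun y : R2 => ‖y - p‖ ^ 2 :=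
  (contDiff_id.sub contDiff_const).norm_sq ℝ

lemma lap_normSq (p x : R2) : lap (fun y => ‖y - p‖ ^ 2) x = 4 := by
  have := lap_radial (φ := id) (φ1 := fun _ => 1) (φ2 := 0) p x
    (Eventually.of_forall fun t => hasDerivAt_id t) (hasDerivAt_const _ _)
  simpa using this

lemma lap_log (x : R2) (hx : x ≠ 0) : lap (fun y => Real.log ‖y‖) x = 0 := by
  have hpos : 0 < ‖x - 0‖ ^ 2 := by rw [sub_zero]; positivity
  have h := lap_radial (φ := fun t => (1/2) * Real.log t) (φ1 := fun t => (1/2) * t⁻¹)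
    (φ2 := (1/2) * (-(((‖x - 0‖ ^ 2)) ^ 2)⁻¹)) 0 x
    (by
      filter_upwards [lt_mem_nhds hpos] with t ht
      exact (Real.hasDerivAt_log ht.ne').const_mul _)
    ((hasDerivAt_inv hpos.ne').const_mul _)
  have e : (fun y : R2 => Real.log ‖y‖) = fun y => (1/2) * Real.log (‖y - 0‖ ^ 2) := by
    ext y; rw [Real.log_pow]; simp
  rw [e, h]
  field_simp
  ring

lemma lap_gauss (A : ℝ) (x : R2) : lap (fun y => Real.exp (-A * ‖y‖ ^ 2)) x =
    (4 * A ^ 2 * ‖x‖ ^ 2 - 4 * A) * Real.exp (-A * ‖x‖ ^ 2) := by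
  have hd : ∀ t : ℝ, HasDerivAt (fun t => Real.exp (-A * t)) (-A * Real.exp (-A * t)) t := by
    intro t
    have := ((hasDerivAt_id t).const_mul (-A)).exp
    simpa [mul_comm] using this
  have h := lap_radial (φ := fun t => Real.exp (-A * t)) (φ1 := fun t => -A * Real.exp (-A * t)) 0 x
    (Eventually.of_forall hd) ((hd _).const_mul (-A))
  simp only [sub_zero] at h
  rw [h]; ring

/-- The second derivative test on the line. -/
lemma deriv_deriv_nonpos_of_isLocalMax {g : ℝ → ℝ} (hc : ContinuousAt g 0)
    (hmax : IsLocalMax g 0) : deriv (deriv g) 0 ≤ 0 := by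
  by_contra! hpos
  have hmin := isLocalMin_of_deriv_deriv_pos hpos hmax.deriv_eq_zero hc
  have hconst : g =ᶠ[nhds 0] fun _ => g 0 := by
    filter_upwards [hmax, hmin] with t h1 h2 using le_antisymm h1 h2
  have : deriv (deriv g) 0 = 0 := by
    rw [hconst.deriv.deriv_eq]; simp
  linarith

lemma lap_nonpos_of_isLocalMax {f : R2 → ℝ} {x : R2} (hf : ContDiffAt ℝ 2 f x)
    (hmax : IsLocalMax f x) : lap f x ≤ 0 := by
  unfold lap
  refine Finset.sum_nonpos fun i _ => ?_
  have hline : Continuous fun t : ℝ => x + t • ee i := by fun_prop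
  have h0 : Tendsto (fun t : ℝ => x + t • ee i) (nhds 0) (nhds x) := by
    simpa using hline.tendsto 0
  have hd : ∀ t : ℝ, HasDerivAt (fun t : ℝ => x + t • ee i) (ee i) t := by
    intro t
    simpa using ((hasDerivAt_id t).smul_const (ee i)).const_add x
  have hmax' : IsLocalMax (fun t : ℝ => f (x + t • ee i)) 0 := by
    have := h0.eventually hmax
    simpa [IsLocalMax, IsMaxFilter] using this
  have hcf : ContinuousAt f (x + (0:ℝ) • ee i) := by simpa using hf.continuousAt
  have hcont : ContinuousAt (fun t : ℝ => f (x + t • ee i)) 0 :=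
    ContinuousAt.comp (f := fun t : ℝ => x + t • ee i) hcf hline.continuousAt
  have h2 := deriv_deriv_nonpos_of_isLocalMax hcont hmax'
  have e1 : deriv (fun t : ℝ => f (x + t • ee i)) =ᶠ[nhds 0]
      fun t => fderiv ℝ f (x + t • ee i) (ee i) := by
    filter_upwards [h0.eventually (eventually_differentiableAt hf)] with t ht
    exact (ht.hasFDerivAt.comp_hasDerivAt t (hd t)).deriv
  rw [e1.deriv_eq] at h2
  have h3 : HasFDerivAt (fun y => fderiv ℝ f y (ee i))
      (fderiv ℝ (fun y => fderiv ℝ f y (ee i)) x) (x + (0:ℝ) • ee i) := by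
    simpa using (differentiableAt_fderiv_apply hf (ee i)).hasFDerivAt
  have h4 := (h3.comp_hasDerivAt (0:ℝ) (hd 0)).deriv
  change deriv (fun t : ℝ => fderiv ℝ f (x + t • ee i) (ee i)) 0 = _ at h4
  rw [h4] at h2
  exact h2

/-- Comparison at an interior maximum of `f - g`. -/
lemma lap_le_of_isLocalMax_sub {f g : R2 → ℝ} {x : R2} (hf : ContDiffAt ℝ 2 f x)
    (hg : ContDiffAt ℝ 2 g x) (hmax : IsLocalMax (fun y => f y - g y) x) :
    lap f x ≤ lap g x := by
  have := lap_nonpos_of_isLocalMax (hf.sub hg) hmax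
  rw [lap_sub hf hg] at this
  linarith

lemma lap_comp_affine (f : R2 → ℝ) (x0 : R2) (c : ℝ) (y : R2) :
    lap (fun y => f (x0 + c • y)) y = c ^ 2 * lap f (x0 + c • y) := by
  have h1 : ∀ (f : R2 → ℝ) (y v : R2),
      fderiv ℝ (fun y => f (x0 + c • y)) y v = c * fderiv ℝ f (x0 + c • y) v := by
    intro f y v
    have := fderiv_comp_smul (𝕜 := ℝ) (f := fun z => f (x0 + z)) (x := y) c
    rw [this, fderiv_comp_add_left]; rfl
  unfold lap
  rw [Finset.mul_sum]
  refine Finset.sum_congr rfl fun i _ => ?_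
  simp only [h1]
  have h2 := h1 (fun z => c * fderiv ℝ f z (ee i)) y (ee i)
  have h3 : fderiv ℝ (fun z => c * fderiv ℝ f z (ee i)) (x0 + c • y) =
      c • fderiv ℝ (fun z => fderiv ℝ f z (ee i)) (x0 + c • y) :=
    congrFun (fderiv_const_smul_field (𝕜 := ℝ) (f := fun z => fderiv ℝ f z (ee i)) c) _
  rw [h3] at h2
  refine h2.trans ?_
  rw [pow_two, mul_assoc]; rfl

/-- The weak maximum principle, for functions that are subharmonic where they are positive. -/
lemma max_principle {K : Set R2} (hK : IsCompact K) {f : R2 → ℝ} (hc : ContinuousOn f K)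
    (hC2 : ∀ x ∈ interior K, ContDiffAt ℝ 2 f x)
    (hlap : ∀ x ∈ interior K, 0 < f x → 0 ≤ lap f x)
    (hbd : ∀ x ∈ K, x ∉ interior K → f x ≤ 0) : ∀ x ∈ K, f x ≤ 0 := by
  intro x0 hx0
  by_contra! hpos
  obtain ⟨R, hR⟩ := hK.isBounded.exists_norm_le
  have hR' : ∀ x ∈ K, ‖x - 0‖ ^ 2 ≤ R ^ 2 := by
    intro x hx
    have := hR x hx
    rw [sub_zero]
    gcongr
  set δ : ℝ := f x0 / (2 * (R ^ 2 + 1)) with hδ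
  have hδ0 : 0 < δ := by positivity
  have hδR : δ * R ^ 2 < f x0 := by
    rw [hδ, div_mul_eq_mul_div, div_lt_iff₀ (by positivity)]
    nlinarith [sq_nonneg R]
  obtain ⟨x1, hx1, hmax⟩ := hK.exists_isMaxOn ⟨x0, hx0⟩
    (f := fun x => f x + δ * ‖x - 0‖ ^ 2) (by fun_prop)
  have h01 : f x0 + δ * ‖x0 - 0‖ ^ 2 ≤ f x1 + δ * ‖x1 - 0‖ ^ 2 := hmax hx0
  have hf1 : 0 < f x1 := by
    have := mul_le_mul_of_nonneg_left (hR' x1 hx1) hδ0.le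
    have : 0 ≤ δ * ‖x0 - 0‖ ^ 2 := by positivity
    linarith
  have hint : x1 ∈ interior K := by
    by_contra h
    linarith [hbd x1 hx1 h]
  have hloc : IsLocalMax (fun x => f x + δ * ‖x - 0‖ ^ 2) x1 :=
    hmax.isLocalMax (mem_interior_iff_mem_nhds.1 hint)
  have hq : ContDiffAt ℝ 2 (fun x : R2 => ‖x - 0‖ ^ 2) x1 := (contDiff_normSq 0).contDiffAt
  have := lap_nonpos_of_isLocalMax ((hC2 x1 hint).add (contDiffAt_const.mul hq)) hloc
  rw [lap_add (hC2 x1 hint) (contDiffAt_const.mul hq), lap_const_mul δ hq, lap_normSq] at this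
  linarith [hlap x1 hint hf1]

/-! ### Weighted ball averages -/

/-- The averaging kernel `2(1 - |y|²)₊` on the unit ball. -/
def kk (y : R2) : ℝ := 2 * max (1 - ‖y‖ ^ 2) 0

/-- The kernel `(1 - |y|²)₊²`; its gradient is `-2y` times the averaging kernel `kk`. -/
def k1 (y : R2) : ℝ := max (1 - ‖y‖ ^ 2) 0 ^ 2

/-- The (unnormalized) average of `f` over the ball of radius `r` around `x0`, with weight `kk`. -/
def bav (f : R2 → ℝ) (x0 : R2) (r : ℝ) : ℝ := ∫ y, f (x0 + r • y) * kk y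

/-- The total mass of the averaging kernel. -/
def mass : ℝ := ∫ y, kk y

lemma continuous_kk : Continuous kk := by unfold kk; fun_prop
lemma continuous_k1 : Continuous k1 := by unfold k1; fun_prop
lemma kk_nonneg (y : R2) : 0 ≤ kk y := by unfold kk; positivity
lemma k1_nonneg (y : R2) : 0 ≤ k1 y := by unfold k1; positivity

lemma kk_le_two (y : R2) : kk y ≤ 2 := by
  have : max (1 - ‖y‖ ^ 2) 0 ≤ 1 := max_le (by nlinarith [sq_nonneg ‖y‖]) (by norm_num)
  unfold kk; linarith

lemma max_le_one (y : R2) : max (1 - ‖y‖ ^ 2) 0 ≤ 1 :=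
  max_le (by nlinarith [sq_nonneg ‖y‖]) (by norm_num)

lemma k1_le_one (y : R2) : k1 y ≤ 1 := by
  have h0 : 0 ≤ max (1 - ‖y‖ ^ 2) 0 := le_max_right _ _
  unfold k1; nlinarith [max_le_one y]

lemma k1_le_kk (y : R2) : k1 y ≤ kk y := by
  have h0 : 0 ≤ max (1 - ‖y‖ ^ 2) 0 := le_max_right _ _
  unfold k1 kk; nlinarith [max_le_one y]

lemma kk_eq_zero {y : R2} (hy : 1 ≤ ‖y‖) : kk y = 0 := by
  unfold kk
  rw [max_eq_right (by nlinarith)]; simp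

lemma k1_eq_zero {y : R2} (hy : 1 ≤ ‖y‖) : k1 y = 0 := by
  unfold k1
  rw [max_eq_right (by nlinarith)]; simp

lemma integrable_mul_of_ball {f ψ : R2 → ℝ} (hf : ContinuousOn f (closedBall 0 1))
    (hψ : Continuous ψ) (h0 : ∀ y, 1 ≤ ‖y‖ → ψ y = 0) : Integrable fun y => f y * ψ y := by
  have h1 : IntegrableOn (fun y => f y * ψ y) (closedBall 0 1) :=
    (hf.mul hψ.continuousOn).integrableOn_compact (isCompact_closedBall _ _)
  rwa [integrableOn_iff_integrable_of_support_subset] at h1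
  intro y hy
  by_contra h
  rw [mem_closedBall_zero_iff, not_le] at h
  exact hy (by simp [h0 y h.le])

lemma integrable_kk : Integrable kk := by
  simpa using integrable_mul_of_ball (f := fun _ => 1) continuousOn_const continuous_kk
    fun y => kk_eq_zero

lemma integrable_k1 : Integrable k1 := by
  simpa using integrable_mul_of_ball (f := fun _ => 1) continuousOn_const continuous_k1
    fun y => k1_eq_zero

lemma mass_pos : 0 < mass := by
  refine integral_pos_of_integrable_nonneg_nonzero (x := 0) continuous_kk integrable_kk
    (fun y => kk_nonneg y) ?_
  simp [kk]

lemma hasDerivAt_max_sq (s : ℝ) : HasDerivAt (fun s : ℝ => max s 0 ^ 2) (2 * max s 0) s := by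
  rcases lt_trichotomy s 0 with h | h | h
  · rw [max_eq_right h.le, mul_zero]
    refine (hasDerivAt_const s (0:ℝ)).congr_of_eventuallyEq ?_
    filter_upwards [gt_mem_nhds h] with t ht
    simp [max_eq_right ht.le]
  · subst h
    have h1 : HasDerivWithinAt (fun s : ℝ => max s 0 ^ 2) 0 (Iic 0) 0 :=
      (hasDerivWithinAt_const (0:ℝ) _ (0:ℝ)).congr
        (fun t ht => by simp [max_eq_right (mem_Iic.1 ht)]) (by simp)
    have h2 : HasDerivWithinAt (fun s : ℝ => max s 0 ^ 2) 0 (Ici 0) 0 := by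
      have := (hasDerivAt_pow 2 (0:ℝ)).hasDerivWithinAt (s := Ici 0)
      simp only [Nat.cast_ofNat, Nat.add_one_sub_one, pow_one, mul_zero] at this
      exact this.congr (fun t ht => by simp [max_eq_left (mem_Ici.1 ht)]) (by simp)
    have := h1.union h2
    rw [Iic_union_Ici, hasDerivWithinAt_univ] at this
    simpa using this
  · rw [max_eq_left h.le]
    have := hasDerivAt_pow 2 s
    simp only [Nat.cast_ofNat, Nat.add_one_sub_one, pow_one] at this
    refine this.congr_of_eventuallyEq ?_
    filter_upwards [lt_mem_nhds h] with t ht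
    simp [max_eq_left ht.le]

lemma hasFDerivAt_k1 (y : R2) :
    HasFDerivAt k1 ((-2 * kk y) • (innerSL ℝ y)) y := by
  have hsq : HasFDerivAt (fun y : R2 => 1 - ‖y‖ ^ 2) (-(2 • (innerSL ℝ y))) y := by
    have := ((hasFDerivAt_id (𝕜 := ℝ) y).norm_sq).const_sub 1
    simpa using this
  have h := (hasDerivAt_max_sq (1 - ‖y‖ ^ 2)).comp_hasFDerivAt y hsq
  refine h.congr_fderiv ?_
  ext v
  simp [kk]
  ring

lemma affine_mem_ball {x0 y : R2} {r R : ℝ} (hr : |r| < R) (hy : ‖y‖ ≤ 1) :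
    x0 + r • y ∈ ball x0 R := by
  rw [mem_ball, dist_eq_norm]
  simp only [add_sub_cancel_left, norm_smul, Real.norm_eq_abs]
  nlinarith [abs_nonneg r]

lemma contDiffAt_of_ball {f : R2 → ℝ} {x0 x : R2} {R : ℝ}
    (hf : ContDiffOn ℝ 2 f (ball x0 R)) (hx : x ∈ ball x0 R) : ContDiffAt ℝ 2 f x :=
  hf.contDiffAt (isOpen_ball.mem_nhds hx)

lemma continuousOn_second {f : R2 → ℝ} {x0 : R2} {R : ℝ}
    (hf : ContDiffOn ℝ 2 f (ball x0 R)) (i : Fin 2) :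
    ContinuousOn (fun z => fderiv ℝ (fun y => fderiv ℝ f y (ee i)) z (ee i)) (ball x0 R) := by
  have h1 : ContDiffOn ℝ 1 (fderiv ℝ f) (ball x0 R) :=
    hf.fderiv_of_isOpen isOpen_ball (by norm_num)
  have h2 : ContDiffOn ℝ 1 (fun y => fderiv ℝ f y (ee i)) (ball x0 R) :=
    h1.clm_apply contDiffOn_const
  exact (h2.continuousOn_fderiv_of_isOpen isOpen_ball (by norm_num)).clm_apply continuousOn_const

lemma continuousOn_lap {f : R2 → ℝ} {x0 : R2} {R : ℝ} (hf : ContDiffOn ℝ 2 f (ball x0 R)) :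
    ContinuousOn (lap f) (ball x0 R) := by
  unfold lap
  exact continuousOn_finsetSum _ fun i _ => continuousOn_second hf i

lemma mapsTo_affine {x0 : R2} {r R : ℝ} (hr : |r| < R) :
    MapsTo (fun y : R2 => x0 + r • y) (closedBall 0 1) (ball x0 R) :=
  fun _ hy => affine_mem_ball hr (mem_closedBall_zero_iff.1 hy)

/-- Integration by parts: the radial derivative of the ball average only sees the Laplacian. -/
lemma integral_radial {f : R2 → ℝ} {x0 : R2} {R r : ℝ} (hf : ContDiffOn ℝ 2 f (ball x0 R))
    (hr : |r| < R) :
    ∫ y, fderiv ℝ f (x0 + r • y) y * kk y = r / 2 * ∫ y, lap f (x0 + r • y) * k1 y := by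
  have hf1 : ContDiffOn ℝ 1 (fderiv ℝ f) (ball x0 R) :=
    hf.fderiv_of_isOpen isOpen_ball (by norm_num)
  have haff : Continuous fun y : R2 => x0 + r • y := by fun_prop
  have hd : ∀ i, ContinuousOn (fun y : R2 => fderiv ℝ f (x0 + r • y) (ee i)) (closedBall 0 1) :=
    fun i => (hf1.continuousOn.clm_apply continuousOn_const).comp haff.continuousOn
      (mapsTo_affine hr)
  have hd2 : ∀ i, ContinuousOn (fun y : R2 =>
      fderiv ℝ (fun y => fderiv ℝ f y (ee i)) (x0 + r • y) (ee i)) (closedBall 0 1) :=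
    fun i => (continuousOn_second hf i).comp haff.continuousOn (mapsTo_affine hr)
  have hk1' : ∀ (i : Fin 2) (y : R2), fderiv ℝ k1 y (ee i) = -2 * kk y * y i := by
    intro i y
    rw [(hasFDerivAt_k1 y).fderiv]
    simp [ee, EuclideanSpace.inner_single_right]
  have hsupp : tsupport k1 ⊆ closedBall 0 1 := by
    refine closure_minimal (fun y hy => ?_) isClosed_closedBall
    by_contra h
    rw [mem_closedBall_zero_iff, not_le] at h
    exact hy (k1_eq_zero h.le)
  have hpart : ∀ i : Fin 2, ∫ y, fderiv ℝ f (x0 + r • y) (ee i) * (kk y * y i) =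
      r / 2 * ∫ y, fderiv ℝ (fun y => fderiv ℝ f y (ee i)) (x0 + r • y) (ee i) * k1 y := by
    intro i
    set F : R2 → ℝ := fun y => fderiv ℝ f (x0 + r • y) (ee i) with hF
    have hFd : ∀ y ∈ closedBall (0:R2) 1, HasFDerivAt F
        (r • fderiv ℝ (fun y => fderiv ℝ f y (ee i)) (x0 + r • y)) y := by
      intro y hy
      have h1 : DifferentiableAt ℝ (fun y => fderiv ℝ f y (ee i)) (x0 + r • y) :=
        differentiableAt_fderiv_apply (contDiffAt_of_ball hf (mapsTo_affine hr hy)) _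
      have h2 : HasFDerivAt (fun y : R2 => x0 + r • y) (r • ContinuousLinearMap.id ℝ R2) y :=
        ((hasFDerivAt_id y).const_smul r).const_add x0
      refine (h1.hasFDerivAt.comp y h2).congr_fderiv ?_
      ext v; simp
    have hF' : ∀ y ∈ closedBall (0:R2) 1, fderiv ℝ F y (ee i) =
        r * fderiv ℝ (fun y => fderiv ℝ f y (ee i)) (x0 + r • y) (ee i) := by
      intro y hy; rw [(hFd y hy).fderiv]; simp
    have hmul : ∀ y, fderiv ℝ F y (ee i) * k1 y =
        r * fderiv ℝ (fun y => fderiv ℝ f y (ee i)) (x0 + r • y) (ee i) * k1 y := by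
      intro y
      by_cases hy : ‖y‖ ≤ 1
      · rw [hF' y (mem_closedBall_zero_iff.2 hy)]
      · rw [k1_eq_zero (not_le.1 hy).le]; simp
    have hkc : Continuous fun y : R2 => kk y * y i := by
      have := continuous_kk
      fun_prop
    have hint : Integrable fun y : R2 => F y * (kk y * y i) :=
      integrable_mul_of_ball (hd i) hkc fun y hy => by rw [kk_eq_zero hy, zero_mul]
    have key := integral_mul_fderiv_eq_neg_fderiv_mul_of_integrable (μ := volume)
      (f := F) (g := k1) (v := ee i)
      (by
        simp only [hmul]
        exact integrable_mul_of_ball ((hd2 i).const_smul r) continuous_k1 fun y => k1_eq_zero)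
      (by
        simp only [hk1']
        refine (hint.const_mul (-2)).congr (Eventually.of_forall fun y => ?_)
        simp only; ring)
      (integrable_mul_of_ball (hd i) continuous_k1 fun y => k1_eq_zero)
      (fun y hy => (hFd y (hsupp hy)).differentiableAt)
      (fun y _ => (hasFDerivAt_k1 y).differentiableAt)
    simp only [hmul, hk1'] at key
    have e1 : ∀ y : R2, F y * (-2 * kk y * y i) = -2 * (F y * (kk y * y i)) := fun y => by ring
    simp only [e1] at key
    rw [integral_const_mul] at key
    simp only [mul_assoc, integral_const_mul] at key
    linarith
  have hlin : ∀ y : R2, fderiv ℝ f (x0 + r • y) y * kk y =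
      ∑ i, fderiv ℝ f (x0 + r • y) (ee i) * (kk y * y i) := by
    intro y
    have hy : y = ∑ i, y i • ee i := by
      ext j; fin_cases j <;> simp [ee]
    conv_lhs => rw [hy]
    simp only [map_sum, map_smul, Finset.sum_mul]
    refine Finset.sum_congr rfl fun i _ => ?_
    rw [← hy]; simp only [smul_eq_mul]; ring
  have hl : ∀ y : R2, lap f (x0 + r • y) * k1 y =
      ∑ i, fderiv ℝ (fun y => fderiv ℝ f y (ee i)) (x0 + r • y) (ee i) * k1 y := by
    intro y; rw [← Finset.sum_mul]; rfl
  simp only [hlin, hl]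
  rw [integral_finsetSum, integral_finsetSum, Finset.mul_sum]
  · exact Finset.sum_congr rfl fun i _ => hpart i
  · exact fun i _ => integrable_mul_of_ball (hd2 i) continuous_k1 fun y => k1_eq_zero
  · intro i _
    refine integrable_mul_of_ball (hd i) ?_ fun y hy => by rw [kk_eq_zero hy, zero_mul]
    have := continuous_kk
    fun_prop

/-- The derivative of the ball average in the radius. -/
lemma hasDerivAt_bav {f : R2 → ℝ} {x0 : R2} {R r : ℝ} (hf : ContDiffOn ℝ 2 f (ball x0 R))
    (hr : |r| < R) :
    HasDerivAt (bav f x0) (r / 2 * ∫ y, lap f (x0 + r • y) * k1 y) r := by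
  rw [← integral_radial hf hr]
  obtain ⟨r', hr1, hr2⟩ := exists_between hr
  have hr'0 : 0 < r' := (abs_nonneg r).trans_lt hr1
  have hf1 : ContinuousOn (fderiv ℝ f) (ball x0 R) :=
    hf.continuousOn_fderiv_of_isOpen isOpen_ball (by norm_num)
  obtain ⟨B, hB⟩ := (isCompact_closedBall x0 r').exists_bound_of_continuousOn
    (hf1.mono (closedBall_subset_ball hr2))
  have hset : ∀ φ : R2 → ℝ, ∫ y in closedBall (0:R2) 1, φ y * kk y = ∫ y, φ y * kk y := by
    intro φ
    refine setIntegral_eq_integral_of_forall_compl_eq_zero fun y hy => ?_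
    rw [mem_closedBall_zero_iff, not_le] at hy
    rw [kk_eq_zero hy.le, mul_zero]
  have haff : ∀ ρ : ℝ, Continuous fun y : R2 => x0 + ρ • y := fun ρ => by fun_prop
  have hcF : ∀ ρ : ℝ, |ρ| < R →
      ContinuousOn (fun y : R2 => f (x0 + ρ • y) * kk y) (closedBall 0 1) := fun ρ hρ =>
    (hf.continuousOn.comp (haff ρ).continuousOn (mapsTo_affine hρ)).mul continuous_kk.continuousOn
  have h := hasDerivAt_integral_of_dominated_loc_of_deriv_le
    (μ := volume.restrict (closedBall (0:R2) 1))
    (F := fun ρ y => f (x0 + ρ • y) * kk y) (x₀ := r) (s := ball 0 r')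
    (F' := fun ρ y => fderiv ℝ f (x0 + ρ • y) y * kk y) (bound := fun _ => B * 2)
    (isOpen_ball.mem_nhds (by simpa using hr1))
    (by
      have : {ρ : ℝ | |ρ| < R} ∈ nhds r := (isOpen_lt continuous_abs continuous_const).mem_nhds hr
      filter_upwards [this] with ρ hρ
      exact (hcF ρ hρ).aestronglyMeasurable isClosed_closedBall.measurableSet)
    ((hcF r hr).integrableOn_compact (isCompact_closedBall _ _))
    (by
      refine ContinuousOn.aestronglyMeasurable ?_ isClosed_closedBall.measurableSet
      exact ((hf1.comp (haff r).continuousOn (mapsTo_affine hr)).clm_apply continuousOn_id).mul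
        continuous_kk.continuousOn)
    (by
      refine (ae_restrict_iff' isClosed_closedBall.measurableSet).2
        (Eventually.of_forall fun y hy ρ hρ => ?_)
      rw [mem_closedBall_zero_iff] at hy
      rw [mem_ball_zero_iff, Real.norm_eq_abs] at hρ
      rw [norm_mul, Real.norm_of_nonneg (kk_nonneg y)]
      have hb := hB _ (ball_subset_closedBall (affine_mem_ball (x0 := x0) hρ hy))
      have hB0 : 0 ≤ B := (norm_nonneg _).trans hb
      refine mul_le_mul ?_ (kk_le_two y) (kk_nonneg y) hB0
      calc ‖fderiv ℝ f (x0 + ρ • y) y‖ ≤ ‖fderiv ℝ f (x0 + ρ • y)‖ * ‖y‖ :=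
            ContinuousLinearMap.le_opNorm _ _
        _ ≤ B * 1 := mul_le_mul hb hy (norm_nonneg _) hB0
        _ = B := mul_one B)
    (by
      refine integrableOn_const ?_
      exact (isCompact_closedBall _ _).measure_lt_top.ne)
    (by
      refine (ae_restrict_iff' isClosed_closedBall.measurableSet).2
        (Eventually.of_forall fun y hy ρ hρ => ?_)
      rw [mem_closedBall_zero_iff] at hy
      rw [mem_ball_zero_iff, Real.norm_eq_abs] at hρ
      have h1 : DifferentiableAt ℝ f (x0 + ρ • y) :=
        (contDiffAt_of_ball hf (affine_mem_ball (hρ.trans hr2) hy)).differentiableAt (by norm_num)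
      have h2 : HasDerivAt (fun ρ : ℝ => x0 + ρ • y) y ρ := by
        simpa using ((hasDerivAt_id ρ).smul_const y).const_add x0
      exact (h1.hasFDerivAt.comp_hasDerivAt ρ h2).mul_const (kk y))
  have h2 := h.2
  simp only [hset] at h2
  exact h2

lemma integral_affine (f ψ : R2 → ℝ) (x0 : R2) {r : ℝ} (hr : 0 < r) :
    ∫ y, f (x0 + r • y) * ψ y = (r ^ 2)⁻¹ * ∫ x, f x * ψ (r⁻¹ • (x - x0)) := by
  have h := Measure.integral_comp_smul volume (fun z : R2 => f (x0 + z) * ψ (r⁻¹ • z)) r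
  simp only [smul_smul, inv_mul_cancel₀ hr.ne', one_smul] at h
  rw [h, ← integral_add_left_eq_self (fun x => f x * ψ (r⁻¹ • (x - x0))) x0]
  simp [abs_of_pos (inv_pos.2 (pow_pos hr 2))]

lemma bav_zero (f : R2 → ℝ) (x0 : R2) : bav f x0 0 = mass * f x0 := by
  simp [bav, mass, integral_const_mul, mul_comm]

lemma continuousOn_bav {f : R2 → ℝ} {x0 : R2} {R : ℝ} (hf : ContDiffOn ℝ 2 f (ball x0 R)) :
    ContinuousOn (bav f x0) {r | |r| < R} := fun _ hr =>
  (hasDerivAt_bav hf hr).continuousAt.continuousWithinAt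

/-- The sub-mean-value property. -/
lemma mass_mul_le_bav {f : R2 → ℝ} {x0 : R2} {R r : ℝ} (hf : ContDiffOn ℝ 2 f (ball x0 R))
    (hl : ∀ x ∈ ball x0 R, 0 ≤ lap f x) (h0 : 0 ≤ r) (hr : r < R) :
    mass * f x0 ≤ bav f x0 r := by
  rw [← bav_zero]
  have habs : ∀ s ∈ Icc 0 r, |s| < R := fun s hs => by
    rw [abs_of_nonneg hs.1]; exact hs.2.trans_lt hr
  refine monotoneOn_of_deriv_nonneg (convex_Icc 0 r)
    ((continuousOn_bav hf).mono habs) ?_ ?_ ⟨le_rfl, h0⟩ ⟨h0, le_rfl⟩ h0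
  · intro s hs
    exact (hasDerivAt_bav hf (habs s (interior_subset hs))).differentiableAt.differentiableWithinAt
  · intro s hs
    have hs' := habs s (interior_subset hs)
    rw [(hasDerivAt_bav hf hs').deriv]
    refine mul_nonneg (by linarith [(interior_subset hs).1]) (integral_nonneg fun y => ?_)
    by_cases hy : ‖y‖ ≤ 1
    · exact mul_nonneg (hl _ (affine_mem_ball hs' hy)) (k1_nonneg y)
    · simp [k1_eq_zero (not_le.1 hy).le]

/-- A nonnegative subharmonic function is controlled on a ball by its average over the ball of
four times the radius. -/
lemma le_bav {f : R2 → ℝ} {R r : ℝ} (hf : ContDiffOn ℝ 2 f (ball 0 R))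
    (hl : ∀ x ∈ ball (0:R2) R, 0 ≤ lap f x) (hpos : ∀ x ∈ ball (0:R2) R, 0 ≤ f x)
    (h0 : 0 < r) (hr : r < R) {y : R2} (hy : ‖y‖ ≤ r / 4) :
    mass * f y ≤ 64 / 3 * bav f 0 r := by
  have hsub : ball y (r / 2) ⊆ ball 0 R := by
    intro x hx
    rw [mem_ball, dist_eq_norm] at hx
    rw [mem_ball_zero_iff]
    have : ‖x‖ ≤ ‖x - y‖ + ‖y‖ := by simpa using norm_add_le (x - y) y
    linarith
  have h1 := mass_mul_le_bav (r := r / 4) (hf.mono hsub) (fun x hx => hl x (hsub hx))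
    (by linarith) (by linarith)
  refine h1.trans ?_
  have hr4 : 0 < r / 4 := by linarith
  have hint : ∀ (z : R2) (s : ℝ), 0 < s → closedBall z s ⊆ ball 0 R →
      Integrable fun x => f x * kk (s⁻¹ • (x - z)) := by
    intro z s hs hz
    have h1 : IntegrableOn (fun x => f x * kk (s⁻¹ • (x - z))) (closedBall z s) := by
      refine ContinuousOn.integrableOn_compact (isCompact_closedBall _ _) ?_
      refine (hf.continuousOn.mono hz).mul (Continuous.continuousOn ?_)
      exact continuous_kk.comp (by fun_prop)
    rwa [integrableOn_iff_integrable_of_support_subset] at h1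
    intro x hx
    by_contra h
    rw [mem_closedBall, not_le, dist_eq_norm] at h
    refine hx ?_
    simp only
    rw [kk_eq_zero, mul_zero]
    rw [norm_smul, norm_inv, Real.norm_of_nonneg hs.le, inv_mul_eq_div, le_div_iff₀ hs]
    linarith
  unfold bav
  rw [integral_affine f kk y hr4, integral_affine f kk 0 h0]
  have hcmp : ∫ x, f x * kk ((r / 4)⁻¹ • (x - y)) ≤ ∫ x, 4 / 3 * (f x * kk (r⁻¹ • (x - 0))) := by
    refine integral_mono (hint y _ hr4 ?_) ((hint 0 r h0 ?_).const_mul _) fun x => ?_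
    · exact (closedBall_subset_ball (by linarith)).trans hsub
    · exact closedBall_subset_ball hr
    · by_cases hx : ‖x - y‖ < r / 4
      · have hx2 : ‖x‖ < r / 2 := by
          have : ‖x‖ ≤ ‖x - y‖ + ‖y‖ := by simpa using norm_add_le (x - y) y
          linarith
        have hfx : 0 ≤ f x := hpos x (by rw [mem_ball_zero_iff]; linarith)
        have hk : 3 / 2 ≤ kk (r⁻¹ • (x - 0)) := by
          unfold kk
          have : ‖r⁻¹ • (x - 0)‖ ≤ 1 / 2 := by
            rw [sub_zero, norm_smul, norm_inv, Real.norm_of_nonneg h0.le, inv_mul_eq_div,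
              div_le_iff₀ h0]
            linarith
          have := le_max_left (1 - ‖r⁻¹ • (x - 0)‖ ^ 2) 0
          nlinarith [norm_nonneg (r⁻¹ • (x - 0))]
        have hk2 := kk_le_two ((r / 4)⁻¹ • (x - y))
        simp only
        nlinarith
      · have : kk ((r / 4)⁻¹ • (x - y)) = 0 := by
          apply kk_eq_zero
          rw [norm_smul, norm_inv, Real.norm_of_nonneg hr4.le, inv_mul_eq_div, le_div_iff₀ hr4]
          linarith
        simp only
        rw [this, mul_zero]
        by_cases hx' : x ∈ ball (0:R2) R
        · have := mul_nonneg (hpos x hx') (kk_nonneg (r⁻¹ • (x - 0)))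
          linarith
        · rw [mem_ball_zero_iff, not_lt] at hx'
          rw [kk_eq_zero (y := r⁻¹ • (x - 0))]
          · simp
          · rw [sub_zero, norm_smul, norm_inv, Real.norm_of_nonneg h0.le, inv_mul_eq_div,
              le_div_iff₀ h0]
            linarith
  rw [integral_const_mul] at hcmp
  have e : ((r / 4) ^ 2)⁻¹ = 16 * (r ^ 2)⁻¹ := by field_simp; norm_num
  rw [e]
  have hp : 0 < (r ^ 2)⁻¹ := by positivity
  nlinarith [mul_le_mul_of_nonneg_left hcmp hp.le]

/-- Gronwall's inequality for ball averages: a half-Harnack inequality for nonnegative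
functions with `Δf ≤ f`. -/
lemma bav_le_exp {f : R2 → ℝ} {x0 : R2} {R r : ℝ} (hf : ContDiffOn ℝ 2 f (ball x0 R))
    (hpos : ∀ x ∈ ball x0 R, 0 ≤ f x) (hl : ∀ x ∈ ball x0 R, lap f x ≤ f x)
    (h0 : 0 ≤ r) (hr : r < R) :
    bav f x0 r ≤ mass * f x0 * Real.exp (r ^ 2 / 4) := by
  have habs : ∀ s ∈ Icc 0 r, |s| < R := fun s hs => by
    rw [abs_of_nonneg hs.1]; exact hs.2.trans_lt hr
  have hder : ∀ s ∈ Icc 0 r, HasDerivAt (fun s => bav f x0 s * Real.exp (-(s ^ 2 / 4)))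
      ((s / 2 * ∫ y, lap f (x0 + s • y) * k1 y) * Real.exp (-(s ^ 2 / 4)) +
        bav f x0 s * (Real.exp (-(s ^ 2 / 4)) * (-(s / 2)))) s := by
    intro s hs
    have he : HasDerivAt (fun s : ℝ => -(s ^ 2 / 4)) (-(s / 2)) s := by
      have := ((hasDerivAt_pow 2 s).div_const 4).neg
      refine this.congr_deriv ?_
      simp; ring
    exact (hasDerivAt_bav hf (habs s hs)).mul he.exp
  have hanti := antitoneOn_of_deriv_nonpos (convex_Icc 0 r)
    (fun s hs => (hder s hs).continuousAt.continuousWithinAt)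
    (fun s hs => (hder s (interior_subset hs)).differentiableAt.differentiableWithinAt)
    (by
      intro s hs
      have hs1 := interior_subset hs
      have hs' := habs s hs1
      rw [(hder s hs1).deriv]
      have haff : Continuous fun y : R2 => x0 + s • y := by fun_prop
      have hle : ∫ y, lap f (x0 + s • y) * k1 y ≤ bav f x0 s := by
        refine integral_mono ?_ ?_ fun y => ?_
        · exact integrable_mul_of_ball ((continuousOn_lap hf).comp haff.continuousOn
            (mapsTo_affine hs')) continuous_k1 fun y => k1_eq_zero
        · exact integrable_mul_of_ball (hf.continuousOn.comp haff.continuousOn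
            (mapsTo_affine hs')) continuous_kk fun y => kk_eq_zero
        · by_cases hy : ‖y‖ ≤ 1
          · have hm := affine_mem_ball (x0 := x0) hs' hy
            calc lap f (x0 + s • y) * k1 y ≤ f (x0 + s • y) * k1 y :=
                  mul_le_mul_of_nonneg_right (hl _ hm) (k1_nonneg y)
              _ ≤ f (x0 + s • y) * kk y :=
                  mul_le_mul_of_nonneg_left (k1_le_kk y) (hpos _ hm)
          · simp [k1_eq_zero (not_le.1 hy).le, kk_eq_zero (not_le.1 hy).le]
      have hE := Real.exp_pos (-(s ^ 2 / 4))
      have hs0 : 0 ≤ s / 2 := by linarith [hs1.1]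
      have := mul_nonneg (mul_nonneg hs0 hE.le) (sub_nonneg.2 hle)
      nlinarith)
  have h := hanti ⟨le_rfl, h0⟩ ⟨h0, le_rfl⟩ h0
  simp only [bav_zero] at h
  rw [← div_le_iff₀ (Real.exp_pos _), div_eq_mul_inv, ← Real.exp_neg]
  simpa using h

/-- Logarithmic growth of ball averages when the Laplacian has finite total mass `E`. -/
lemma bav_le_log {f : R2 → ℝ} {R r E : ℝ} (hf : ContDiffOn ℝ 2 f (ball 0 R))
    (hl : ∀ x ∈ ball (0:R2) R, 0 ≤ lap f x) (hint : IntegrableOn (lap f) (ball 0 R))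
    (hE : ∫ x in ball (0:R2) R, lap f x ≤ E) (h1 : 1 ≤ r) (hr : r < R) :
    bav f 0 r ≤ bav f 0 1 + E / 2 * Real.log r := by
  have habs : ∀ s ∈ Icc 1 r, |s| < R := fun s hs => by
    rw [abs_of_nonneg (by linarith [hs.1])]; exact hs.2.trans_lt hr
  have hder : ∀ s ∈ Icc 1 r, HasDerivAt (fun s => bav f 0 s - E / 2 * Real.log s)
      ((s / 2 * ∫ y, lap f (0 + s • y) * k1 y) - E / 2 * s⁻¹) s := by
    intro s hs
    have hs0 : s ≠ 0 := by linarith [hs.1]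
    exact (hasDerivAt_bav hf (habs s hs)).sub ((Real.hasDerivAt_log hs0).const_mul _)
  have hanti := antitoneOn_of_deriv_nonpos (convex_Icc 1 r)
    (fun s hs => (hder s hs).continuousAt.continuousWithinAt)
    (fun s hs => (hder s (interior_subset hs)).differentiableAt.differentiableWithinAt)
    (by
      intro s hs
      have hs1 := interior_subset hs
      have hs' := habs s hs1
      have hs0 : 0 < s := by linarith [hs1.1]
      rw [(hder s hs1).deriv, integral_affine (lap f) k1 0 hs0]
      have hle : ∫ x, lap f x * k1 (s⁻¹ • (x - 0)) ≤ E := by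
        refine le_trans ?_ hE
        rw [← setIntegral_eq_integral_of_forall_compl_eq_zero (s := ball 0 R)]
        · refine integral_mono_of_nonneg ?_ hint ?_
          · refine (ae_restrict_iff' isOpen_ball.measurableSet).2
              (Eventually.of_forall fun x hx => mul_nonneg (hl x hx) (k1_nonneg _))
          · refine (ae_restrict_iff' isOpen_ball.measurableSet).2
              (Eventually.of_forall fun x hx => ?_)
            exact mul_le_of_le_one_right (hl x hx) (k1_le_one _)
        · intro x hx
          rw [mem_ball_zero_iff, not_lt] at hx
          rw [k1_eq_zero, mul_zero]
          rw [sub_zero, norm_smul, norm_inv, Real.norm_of_nonneg hs0.le, inv_mul_eq_div,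
            le_div_iff₀ hs0]
          rw [abs_of_pos hs0] at hs'
          linarith
      have e : s / 2 * ((s ^ 2)⁻¹ * ∫ x, lap f x * k1 (s⁻¹ • (x - 0))) =
          s⁻¹ / 2 * ∫ x, lap f x * k1 (s⁻¹ • (x - 0)) := by
        field_simp
      rw [e]
      have : 0 < s⁻¹ := inv_pos.2 hs0
      nlinarith)
  have h := hanti ⟨le_rfl, h1⟩ ⟨h1, le_rfl⟩ h1
  simp only [Real.log_one] at h
  linarith

/-! ### The rescaled system: equilibrium and decay estimates -/

/-- The rescaled system on a vortex-free set `U`, in the unknowns `w = -u` and `z = 1 - N/λ`, with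
lengths measured in units of `1/λ` and `κ = μ/λ`, together with the a priori bounds coming from
the global maximum principle. -/
structure LocSol (κ : ℝ) (w z : R2 → ℝ) (U : Set R2) : Prop where
  cw : ContDiffOn ℝ 2 w U
  cz : ContDiffOn ℝ 2 z U
  lw : ∀ x ∈ U, lap w x = κ * ((1 - exp (-w x)) - z x)
  lz : ∀ x ∈ U, lap z x = κ ^ 2 * (z x - (1 - exp (-w x))) + κ * exp (-w x) * z x
  w0 : ∀ x ∈ U, 0 ≤ w x
  z0 : ∀ x ∈ U, 0 ≤ z x
  z1 : ∀ x ∈ U, z x ≤ 1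

lemma LocSol.mono {κ : ℝ} {w z : R2 → ℝ} {U V : Set R2} (h : LocSol κ w z U) (hV : V ⊆ U) :
    LocSol κ w z V :=
  ⟨h.cw.mono hV, h.cz.mono hV, fun x hx => h.lw x (hV hx), fun x hx => h.lz x (hV hx),
    fun x hx => h.w0 x (hV hx), fun x hx => h.z0 x (hV hx), fun x hx => h.z1 x (hV hx)⟩

lemma LocSol.w_at {κ : ℝ} {w z : R2 → ℝ} {U : Set R2} (h : LocSol κ w z U) (hU : IsOpen U)
    {x : R2} (hx : x ∈ U) : ContDiffAt ℝ 2 w x := h.cw.contDiffAt (hU.mem_nhds hx)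

lemma LocSol.z_at {κ : ℝ} {w z : R2 → ℝ} {U : Set R2} (h : LocSol κ w z U) (hU : IsOpen U)
    {x : R2} (hx : x ∈ U) : ContDiffAt ℝ 2 z x := h.cz.contDiffAt (hU.mem_nhds hx)

lemma lap_const_mul_normSq (b : ℝ) (y x : R2) :
    lap (fun x => b * ‖x - y‖ ^ 2) x = 4 * b := by
  rw [lap_const_mul _ (contDiff_normSq y).contDiffAt, lap_normSq]; ring

/-- If `w ≤ M₁` on a unit ball, then at its centre `z` is at most the equilibrium value
`1 - e^{-M₁}` up to an error `4/κ²`. -/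
lemma LocSol.z_le {κ M1 : ℝ} {w z : R2 → ℝ} {U : Set R2} (h : LocSol κ w z U) (hU : IsOpen U)
    (hκ : 0 < κ) {y : R2} (hy : closedBall y 1 ⊆ U) (hM : ∀ x ∈ closedBall y 1, w x ≤ M1) :
    z y ≤ 1 - exp (-M1) + 4 / κ ^ 2 := by
  set c0 := 1 - exp (-M1) + 4 / κ ^ 2 with hc0
  have hyy : y ∈ closedBall y 1 := mem_closedBall_self zero_le_one
  have hM0 : 0 ≤ M1 := (h.w0 y (hy hyy)).trans (hM y hyy)
  have hk : 0 < 4 / κ ^ 2 := by positivity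
  have hc0' : 0 ≤ c0 := by
    have : exp (-M1) ≤ 1 := exp_le_one_iff.2 (by linarith)
    linarith
  have hcd : ∀ x, ContDiffAt ℝ 2 (fun x => c0 + 1 * ‖x - y‖ ^ 2) x := fun x =>
    contDiffAt_const.add (contDiffAt_const.mul (contDiff_normSq y).contDiffAt)
  have key := max_principle (f := fun x => z x - (c0 + 1 * ‖x - y‖ ^ 2))
    (isCompact_closedBall y 1)
    ((h.cz.continuousOn.mono hy).sub (fun x _ => (hcd x).continuousAt.continuousWithinAt))
    (fun x hx => (h.z_at hU (hy (interior_subset hx))).sub (hcd x))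
    (by
      intro x hx hpos
      have hxU := hy (interior_subset hx)
      rw [lap_sub (h.z_at hU hxU) (hcd x),
        lap_add contDiffAt_const (contDiffAt_const.mul (contDiff_normSq y).contDiffAt),
        lap_const, lap_const_mul_normSq, h.lz x hxU]
      have h1 : exp (-M1) ≤ exp (-w x) := exp_le_exp.2 (by linarith [hM x (interior_subset hx)])
      have h2 : 0 ≤ κ * exp (-w x) * z x :=
        mul_nonneg (mul_nonneg hκ.le (exp_pos _).le) (h.z0 x hxU)
      have h3 : 4 / κ ^ 2 ≤ z x - (1 - exp (-w x)) := by nlinarith [sq_nonneg ‖x - y‖]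
      have h4 := mul_le_mul_of_nonneg_left h3 (sq_nonneg κ)
      have h5 : κ ^ 2 * (4 / κ ^ 2) = 4 := by field_simp
      linarith)
    (by
      intro x hx hxi
      have : ‖x - y‖ = 1 := by
        rw [interior_closedBall _ one_ne_zero, mem_ball, dist_eq_norm, not_lt] at hxi
        rw [mem_closedBall, dist_eq_norm] at hx
        linarith
      rw [this]
      linarith [h.z1 x (hy hx)])
    y hyy
  simp only [sub_self, norm_zero] at key
  linarith

/-- Decay: as long as `w` is above the threshold `200 b`, passing to a ball of radius smaller by
`2` lowers the supremum of `w` by `b/2`. -/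
lemma LocSol.decay {κ M1 b : ℝ} {w z : R2 → ℝ} {U : Set R2} (h : LocSol κ w z U) (hU : IsOpen U)
    (hb : 0 < b) (hb1 : b ≤ 1 / 400) (hκ : 216 / b ≤ κ) (hM2 : M1 ≤ 2)
    {y : R2} (hy : closedBall y 2 ⊆ U) (hM : ∀ x ∈ closedBall y 2, w x ≤ M1) :
    w y ≤ max (M1 - b / 2) (200 * b) := by
  have hκb : 216 ≤ κ * b := by rwa [div_le_iff₀ hb] at hκ
  have hκ216 : 216 * 400 ≤ κ := by
    refine le_trans ?_ hκ
    rw [le_div_iff₀ hb]; linarith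
  have hκ0 : 0 < κ := by linarith
  set c := 4 * b / κ with hc
  have hcpos : 0 < c := by positivity
  have hκc : κ * c = 4 * b := by rw [hc]; field_simp
  have hc54 : c ≤ b / 54 := by
    rw [hc, div_le_div_iff₀ hκ0 (by norm_num)]; nlinarith
  have hk2 : 4 / κ ^ 2 ≤ b / 54 := by
    rw [div_le_div_iff₀ (by positivity) (by norm_num)]; nlinarith
  have hsub1 : closedBall y 1 ⊆ closedBall y 2 := closedBall_subset_closedBall (by norm_num)
  have hyy : y ∈ closedBall y 1 := mem_closedBall_self zero_le_one
  have hM0 : 0 ≤ M1 := (h.w0 y (hy (hsub1 hyy))).trans (hM y (hsub1 hyy))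
  -- `g = 1 - z - c` stays above `e^{-M₁-b/2}`, so `ζ = -log g` is at most `M₁ + b/2`.
  have hg : ∀ x ∈ closedBall y 1, exp (-(M1 + b / 2)) ≤ 1 - z x - c := by
    intro x hx
    have hx2 : closedBall x 1 ⊆ closedBall y 2 := by
      intro t ht
      rw [mem_closedBall] at *
      linarith [dist_triangle t x y]
    have h1 := h.z_le hU hκ0 (hx2.trans hy) (fun t ht => hM t (hx2 ht))
    have h2 : exp (-(M1 + b / 2)) = exp (-M1) * exp (-(b / 2)) := by
      rw [← exp_add]; congr 1; ring
    have h3 : exp (-(b / 2)) ≤ 1 - b / 3 := by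
      have h4 : 1 + b / 2 ≤ exp (b / 2) := by linarith [add_one_le_exp (b / 2)]
      rw [exp_neg, inv_le_comm₀ (exp_pos _) (by linarith)]
      refine le_trans ?_ h4
      rw [inv_le_iff_one_le_mul₀ (by linarith)]
      nlinarith
    have h5 : (1 : ℝ) / 9 ≤ exp (-M1) := by
      have h6 : exp (-2 : ℝ) ≤ exp (-M1) := exp_le_exp.2 (by linarith)
      have h7 : exp (2 : ℝ) ≤ 9 := by
        have h8 : exp (2 : ℝ) = exp 1 * exp 1 := by rw [← exp_add]; norm_num
        have := exp_one_lt_d9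
        rw [h8]; nlinarith [exp_pos 1]
      rw [exp_neg] at h6
      refine le_trans ?_ h6
      rw [one_div]
      exact inv_anti₀ (exp_pos _) h7
    rw [h2]
    nlinarith [exp_pos (-M1)]
  have hgpos : ∀ x ∈ closedBall y 1, 0 < 1 - z x - c := fun x hx => (exp_pos _).trans_le (hg x hx)
  have hU1 : closedBall y 1 ⊆ U := hsub1.trans hy
  have hq : Continuous fun x : R2 => b * ‖x - y‖ ^ 2 := by fun_prop
  have hqy : b * ‖y - y‖ ^ 2 = 0 := by simp
  have hbdry : ∀ x ∈ closedBall y 1, x ∉ ball y 1 → b * ‖x - y‖ ^ 2 = b := by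
    intro x hx hxi
    rw [mem_ball, dist_eq_norm, not_lt] at hxi
    rw [mem_closedBall, dist_eq_norm] at hx
    rw [le_antisymm hx hxi]; ring
  have hζle : ∀ x ∈ closedBall y 1, -Real.log (1 - z x - c) ≤ M1 + b / 2 := by
    intro x hx
    rw [neg_le, Real.le_log_iff_exp_le (hgpos x hx)]
    exact hg x hx
  obtain ⟨x1, hx1, hmax1⟩ := (isCompact_closedBall y 1).exists_isMaxOn ⟨y, hyy⟩
    ((h.cw.continuousOn.mono hU1).sub hq.continuousOn)
  have hy1 : w y ≤ w x1 - b * ‖x1 - y‖ ^ 2 := by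
    have h' : w y - b * ‖y - y‖ ^ 2 ≤ w x1 - b * ‖x1 - y‖ ^ 2 := hmax1 hyy
    rwa [hqy, sub_zero] at h'
  by_cases hx1b : x1 ∈ ball y 1
  swap
  · rw [hbdry x1 hx1 hx1b] at hy1
    exact le_max_of_le_left (by linarith [hM x1 (hsub1 hx1)])
  have hwζ1 : w x1 ≤ -Real.log (1 - z x1 - c) := by
    have hloc : IsLocalMax (fun x => w x - b * ‖x - y‖ ^ 2) x1 :=
      hmax1.isLocalMax (mem_of_superset (isOpen_ball.mem_nhds hx1b) ball_subset_closedBall)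
    have := lap_le_of_isLocalMax_sub (h.w_at hU (hU1 hx1))
      (contDiffAt_const.mul (contDiff_normSq y).contDiffAt) hloc
    rw [h.lw x1 (hU1 hx1), lap_const_mul_normSq, ← hκc] at this
    have h1 := le_of_mul_le_mul_left this hκ0
    rw [le_neg, Real.log_le_iff_le_exp (hgpos x1 hx1)]
    linarith
  obtain ⟨x2, hx2, hmax2⟩ := (isCompact_closedBall y 1).exists_isMaxOn
    (f := fun x => -Real.log (1 - z x - c) - b * ‖x - y‖ ^ 2) ⟨y, hyy⟩
    (((((continuousOn_const.sub (h.cz.continuousOn.mono hU1)).sub continuousOn_const).log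
      fun x hx => (hgpos x hx).ne').neg).sub hq.continuousOn)
  have hy2 : ∀ x ∈ closedBall y 1, -Real.log (1 - z x - c) - b * ‖x - y‖ ^ 2
      ≤ -Real.log (1 - z x2 - c) - b * ‖x2 - y‖ ^ 2 := fun x hx => hmax2 hx
  have hy3 := hy2 x1 hx1
  by_cases hx2b : x2 ∈ ball y 1
  swap
  · have := hbdry x2 hx2 hx2b
    exact le_max_of_le_left (by linarith [hζle x2 hx2])
  refine le_max_of_le_right ?_
  set g2 := 1 - z x2 - c with hg2
  have hg2pos : 0 < g2 := hgpos x2 hx2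
  have hwζ2 : w x2 ≤ -Real.log g2 := by
    have h' : w x2 - b * ‖x2 - y‖ ^ 2 ≤ w x1 - b * ‖x1 - y‖ ^ 2 := hmax1 hx2
    linarith
  have hew : g2 ≤ exp (-w x2) := by
    rw [← Real.log_le_iff_le_exp hg2pos]; linarith
  have hloc : IsLocalMax (fun x => z x - g2 * b * ‖x - y‖ ^ 2) x2 := by
    filter_upwards [isOpen_ball.mem_nhds hx2b] with x hx
    have hx' := ball_subset_closedBall hx
    have h1 := hy2 x hx'
    have h2 : Real.log g2 + (b * ‖x2 - y‖ ^ 2 - b * ‖x - y‖ ^ 2) ≤ Real.log (1 - z x - c) := by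
      linarith
    rw [Real.le_log_iff_exp_le (hgpos x hx'), exp_add, exp_log hg2pos] at h2
    have h3 := add_one_le_exp (b * ‖x2 - y‖ ^ 2 - b * ‖x - y‖ ^ 2)
    have h4 := mul_le_mul_of_nonneg_left h3 hg2pos.le
    linarith
  have hlap := lap_le_of_isLocalMax_sub (h.z_at hU (hU1 hx2))
    (contDiffAt_const.mul (contDiff_normSq y).contDiffAt) hloc
  rw [lap_const_mul_normSq, h.lz x2 (hU1 hx2)] at hlap
  have hz0 := h.z0 x2 (hU1 hx2)
  have hg21 : g2 ≤ 1 := by linarith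
  have e1 : -c ≤ z x2 - (1 - exp (-w x2)) := by linarith
  have e2 : κ * g2 * z x2 ≤ κ * exp (-w x2) * z x2 := by gcongr
  have e3 : κ * (g2 * z x2) ≤ κ * (κ * c) + 4 * b := by
    nlinarith [mul_le_mul_of_nonneg_left e1 (sq_nonneg κ)]
  have e4 : g2 * z x2 ≤ 4 * b + c := by
    have : κ * (4 * b + c) = κ * (κ * c) + 4 * b := by rw [mul_add, hκc]
    rw [← this] at e3
    exact le_of_mul_le_mul_left e3 hκ0
  have hζ3 : exp (-3 : ℝ) ≤ g2 := by
    refine le_trans (exp_le_exp.2 ?_) (hg x2 hx2)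
    linarith
  have he3 : (1 : ℝ) / 21 ≤ exp (-3 : ℝ) := by
    have h7 : exp (3 : ℝ) ≤ 21 := by
      have h8 : exp (3 : ℝ) = exp 1 * exp 1 * exp 1 := by rw [← exp_add, ← exp_add]; norm_num
      have := exp_one_lt_d9
      rw [h8]
      have h9 : exp 1 * exp 1 ≤ 2.72 * 2.72 := by nlinarith [exp_pos 1]
      nlinarith [exp_pos 1]
    rw [exp_neg, one_div]
    exact inv_anti₀ (exp_pos _) h7
  have hz21 : z x2 ≤ 21 * (4 * b + c) := by
    have := mul_le_mul_of_nonneg_right (he3.trans hζ3) hz0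
    linarith
  have ht : 1 - g2 ≤ 90 * b := by linarith
  have hfin : -Real.log g2 ≤ 200 * b := by
    rw [← Real.log_inv]
    refine (Real.log_le_sub_one_of_pos (inv_pos.2 hg2pos)).trans ?_
    rw [sub_le_iff_le_add, inv_le_iff_one_le_mul₀ hg2pos]
    have h1 : (200 * b + 1) * (1 - 90 * b) ≤ (200 * b + 1) * g2 :=
      mul_le_mul_of_nonneg_left (by linarith) (by linarith)
    have h2 : 200 * b * (90 * b) ≤ 200 * b * (90 * (1 / 400)) :=
      mul_le_mul_of_nonneg_left (by linarith) (by linarith)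
    linarith
  have hq2 : 0 ≤ b * ‖x2 - y‖ ^ 2 := by positivity
  linarith

/-! ### Subharmonic combinations: start, growth and barrier -/

/-- The subharmonic combination `H = w + z/κ`, for which `ΔH = e^{-w} z`. -/
def HH (κ : ℝ) (w z : R2 → ℝ) (x : R2) : ℝ := w x + κ⁻¹ * z x

/-- The combination `Y = H + (1 - z)/κ²`, which dominates `H` and satisfies `ΔY ≤ Y`. -/
def YY (κ : ℝ) (w z : R2 → ℝ) (x : R2) : ℝ := HH κ w z x + κ⁻¹ ^ 2 * (1 - z x)

section
variable {κ : ℝ} {w z : R2 → ℝ} {U : Set R2}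

lemma LocSol.cH (h : LocSol κ w z U) : ContDiffOn ℝ 2 (HH κ w z) U :=
  h.cw.add (contDiffOn_const.mul h.cz)

lemma LocSol.cY (h : LocSol κ w z U) : ContDiffOn ℝ 2 (YY κ w z) U :=
  h.cH.add (contDiffOn_const.mul (contDiffOn_const.sub h.cz))

lemma LocSol.lapH (h : LocSol κ w z U) (hU : IsOpen U) (hκ : 1 ≤ κ) {x : R2} (hx : x ∈ U) :
    lap (HH κ w z) x = exp (-w x) * z x := by
  have hκ0 : κ ≠ 0 := by positivity
  unfold HH
  rw [lap_add (h.w_at hU hx) (contDiffAt_const.mul (h.z_at hU hx)),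
    lap_const_mul _ (h.z_at hU hx), h.lw x hx, h.lz x hx]
  field_simp
  ring

lemma LocSol.H0 (h : LocSol κ w z U) (hκ : 1 ≤ κ) {x : R2} (hx : x ∈ U) : 0 ≤ HH κ w z x :=
  add_nonneg (h.w0 x hx) (mul_nonneg (inv_nonneg.2 (by linarith)) (h.z0 x hx))

lemma LocSol.w_le_H (h : LocSol κ w z U) (hκ : 1 ≤ κ) {x : R2} (hx : x ∈ U) :
    w x ≤ HH κ w z x :=
  le_add_of_nonneg_right (mul_nonneg (inv_nonneg.2 (by linarith)) (h.z0 x hx))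

lemma LocSol.H_le (h : LocSol κ w z U) (hκ : 1 ≤ κ) {x : R2} (hx : x ∈ U) :
    HH κ w z x ≤ w x + κ⁻¹ := by
  have h1 : (0:ℝ) ≤ κ⁻¹ := inv_nonneg.2 (by linarith)
  have := mul_le_mul_of_nonneg_left (h.z1 x hx) h1
  unfold HH; linarith

lemma LocSol.H_le_Y (h : LocSol κ w z U) {x : R2} (hx : x ∈ U) :
    HH κ w z x ≤ YY κ w z x :=
  le_add_of_nonneg_right (mul_nonneg (sq_nonneg _) (by linarith [h.z1 x hx]))

lemma LocSol.Y_le (h : LocSol κ w z U) (hκ : 1 ≤ κ) {x : R2} (hx : x ∈ U) :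
    YY κ w z x ≤ w x + 2 * κ⁻¹ := by
  have h1 : (0:ℝ) ≤ κ⁻¹ := inv_nonneg.2 (by linarith)
  have h2 : κ⁻¹ ≤ 1 := inv_le_one_of_one_le₀ hκ
  have h3 := h.H_le hκ hx
  have h4 : κ⁻¹ ^ 2 * (1 - z x) ≤ κ⁻¹ * 1 :=
    mul_le_mul (by nlinarith) (by linarith [h.z0 x hx]) (by linarith [h.z1 x hx]) h1
  unfold YY; linarith

lemma LocSol.lapH_nonneg (h : LocSol κ w z U) (hU : IsOpen U) (hκ : 1 ≤ κ) {x : R2}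
    (hx : x ∈ U) : 0 ≤ lap (HH κ w z) x := by
  rw [h.lapH hU hκ hx]; exact mul_nonneg (exp_pos _).le (h.z0 x hx)

lemma LocSol.lapY_le (h : LocSol κ w z U) (hU : IsOpen U) (hκ : 1 ≤ κ) {x : R2} (hx : x ∈ U) :
    lap (YY κ w z) x ≤ YY κ w z x := by
  have hκ0 : κ ≠ 0 := by positivity
  have hH : ContDiffAt ℝ 2 (HH κ w z) x := h.cH.contDiffAt (hU.mem_nhds hx)
  have hz := h.z_at hU hx
  have hk0 : (0:ℝ) ≤ κ⁻¹ := inv_nonneg.2 (by linarith)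
  have hcs : ContDiffAt ℝ 2 (fun x => 1 - z x) x := contDiffAt_const.sub hz
  have e : lap (YY κ w z) x = exp (-w x) * z x - (z x - (1 - exp (-w x)))
      - κ⁻¹ * (exp (-w x) * z x) := by
    unfold YY
    rw [lap_add hH (contDiffAt_const.mul hcs), lap_const_mul _ hcs, lap_sub contDiffAt_const hz,
      lap_const, h.lapH hU hκ hx, h.lz x hx]
    field_simp
    ring
  have h1 : exp (-w x) ≤ 1 := exp_le_one_iff.2 (by linarith [h.w0 x hx])
  have h2 := h.z0 x hx
  have h3 : 0 ≤ κ⁻¹ * (exp (-w x) * z x) := by positivity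
  have h4 := add_one_le_exp (-w x)
  have h5 := h.w_le_H hκ hx
  have h6 := h.H_le_Y hx
  rw [e]
  nlinarith

lemma bav_mono {f g : R2 → ℝ} {R r : ℝ} (hf : ContinuousOn f (ball 0 R))
    (hg : ContinuousOn g (ball 0 R)) (hfg : ∀ x ∈ ball (0:R2) R, f x ≤ g x) (h0 : 0 ≤ r)
    (hr : r < R) : bav f 0 r ≤ bav g 0 r := by
  have hr' : |r| < R := by rwa [abs_of_nonneg h0]
  have hm := mapsTo_affine (x0 := 0) hr'
  have hi : ∀ {f : R2 → ℝ}, ContinuousOn f (ball 0 R) →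
      Integrable fun y => f (0 + r • y) * kk y := fun hf =>
    integrable_mul_of_ball (hf.comp (by fun_prop) hm) continuous_kk fun y hy => kk_eq_zero hy
  refine integral_mono (hi hf) (hi hg) fun y => ?_
  by_cases hy : 1 ≤ ‖y‖
  · simp [kk_eq_zero hy]
  · exact mul_le_mul_of_nonneg_right
      (hfg _ (hm (mem_closedBall_zero_iff.2 (not_le.1 hy).le))) (kk_nonneg y)

lemma LocSol.bavH_le {X r : ℝ} (h : LocSol κ w z (ball 0 X)) (hκ : 1 ≤ κ)
    (h0 : 0 ≤ r) (hr : r < X) :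
    bav (HH κ w z) 0 r ≤ mass * (w 0 + 2 * κ⁻¹) * exp (r ^ 2 / 4) := by
  refine (bav_mono h.cH.continuousOn h.cY.continuousOn (fun x hx => h.H_le_Y hx) h0 hr).trans ?_
  refine (bav_le_exp h.cY (fun x hx => (h.H0 hκ hx).trans (h.H_le_Y hx))
    (fun x hx => h.lapY_le isOpen_ball hκ hx) h0 hr).trans ?_
  gcongr
  · exact mass_pos.le
  · exact h.Y_le hκ (mem_ball_self (h0.trans_lt hr))

/-- Harnack-type start: smallness of `w` at the origin controls `H` on a fixed ball. -/
lemma LocSol.start {X S : ℝ} (h : LocSol κ w z (ball 0 X)) (hκ : 1 ≤ κ) (hS : 0 < S)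
    (hX : 4 * S < X) {y : R2} (hy : ‖y‖ ≤ S) :
    HH κ w z y ≤ 64 / 3 * (w 0 + 2 * κ⁻¹) * exp (4 * S ^ 2) := by
  have h1 := le_bav h.cH (fun x hx => h.lapH_nonneg isOpen_ball hκ hx) (fun x hx => h.H0 hκ hx)
    (by linarith : 0 < 4 * S) hX (y := y) (by linarith)
  have h2 := h.bavH_le hκ (by linarith) hX
  rw [show (4 * S) ^ 2 / 4 = 4 * S ^ 2 by ring] at h2
  refine le_of_mul_le_mul_left ?_ mass_pos
  linarith

/-- The energy bound makes `H` grow at most logarithmically. -/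
lemma LocSol.growth {X E : ℝ} (h : LocSol κ w z (ball 0 X)) (hκ : 1 ≤ κ) (hX : 2 ≤ X)
    (hE0 : 0 ≤ E)
    (hint : IntegrableOn (fun x => exp (-w x) * z x) (ball 0 X))
    (hE : ∫ x in ball (0:R2) X, exp (-w x) * z x ≤ E) (hw : w 0 + 2 * κ⁻¹ ≤ 1)
    {y : R2} (hy : ‖y‖ ≤ X / 5) :
    HH κ w z y ≤ 64 / 3 * (2 + E / mass) * (1 + Real.log X) := by
  have hlapeq : ∀ x ∈ ball (0:R2) X, lap (HH κ w z) x = exp (-w x) * z x := fun x hx =>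
    h.lapH isOpen_ball hκ hx
  have h1 := le_bav h.cH (fun x hx => h.lapH_nonneg isOpen_ball hκ hx) (fun x hx => h.H0 hκ hx)
    (by linarith : 0 < 4 * X / 5) (by linarith) (y := y) (by linarith)
  have h2 := bav_le_log h.cH (E := E) (r := 4 * X / 5)
    (fun x hx => h.lapH_nonneg isOpen_ball hκ hx)
    (hint.congr_fun (fun x hx => (hlapeq x hx).symm) measurableSet_ball)
    (by rw [setIntegral_congr_fun measurableSet_ball hlapeq]; exact hE) (by linarith) (by linarith)
  have h3 := h.bavH_le hκ zero_le_one (by linarith : (1:ℝ) < X)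
  have h4 : exp ((1:ℝ) ^ 2 / 4) ≤ 2 := by
    have : exp ((1:ℝ) ^ 2 / 4) ≤ exp (Real.log 2) := exp_le_exp.2 (by
      have := Real.log_two_gt_d9; norm_num; linarith)
    rwa [exp_log (by norm_num)] at this
  have hm := mass_pos
  have h5 : bav (HH κ w z) 0 1 ≤ mass * 1 * 2 := by
    refine h3.trans ?_
    gcongr
  have h6 : Real.log (4 * X / 5) ≤ Real.log X := Real.log_le_log (by linarith) (by linarith)
  have h7 : 0 ≤ Real.log X := Real.log_nonneg (by linarith)
  have h8 : E / 2 * Real.log (4 * X / 5) ≤ E * Real.log X := by nlinarith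
  refine le_of_mul_le_mul_left ?_ hm
  have e : mass * (64 / 3 * (2 + E / mass) * (1 + Real.log X)) =
      64 / 3 * (2 * mass + E) * (1 + Real.log X) := by field_simp
  rw [e]
  nlinarith [mul_nonneg hm.le h7]

/-- Comparison with a logarithmic barrier on the annulus `ρ ≤ |y| ≤ R`. -/
lemma LocSol.barrier {X ρ R a M : ℝ} (h : LocSol κ w z (ball 0 X)) (hκ : 1 ≤ κ) (hρ : 0 < ρ)
    (hρR : ρ < R) (hR : R < X) (ha : 0 ≤ a)
    (h1 : ∀ y : R2, ‖y‖ = ρ → HH κ w z y ≤ a) (h2 : ∀ y : R2, ‖y‖ = R → HH κ w z y ≤ M)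
    {y : R2} (hy : ρ ≤ ‖y‖) (hyR : ‖y‖ ≤ R) :
    HH κ w z y ≤ a + M / Real.log (R / ρ) * Real.log (‖y‖ / ρ) := by
  set K : Set R2 := {y | ρ ≤ ‖y‖ ∧ ‖y‖ ≤ R} with hKdef
  have hL : 0 < Real.log (R / ρ) := Real.log_pos (by rwa [lt_div_iff₀ hρ, one_mul])
  have hKc : IsCompact K := by
    refine (isCompact_closedBall (0:R2) R).of_isClosed_subset ?_ fun y hy =>
      mem_closedBall_zero_iff.2 hy.2
    exact (isClosed_le continuous_const continuous_norm).inter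
      (isClosed_le continuous_norm continuous_const)
  have hKX : K ⊆ ball 0 X := fun y hy => mem_ball_zero_iff.2 (hy.2.trans_lt hR)
  have hne : ∀ y ∈ K, y ≠ 0 := fun y hy h0 => by
    have := hy.1; rw [h0, norm_zero] at this; linarith
  set c := M / Real.log (R / ρ) with hc
  set B : R2 → ℝ := fun y => (a - c * Real.log ρ) + c * Real.log ‖y‖ with hB
  have hBe : ∀ y ∈ K, B y = a + c * Real.log (‖y‖ / ρ) := by
    intro y hy
    rw [hB, Real.log_div (norm_ne_zero_iff.2 (hne y hy)) hρ.ne']; ring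
  have hlogC : ∀ y ∈ K, ContDiffAt ℝ 2 (fun y : R2 => Real.log ‖y‖) y := fun y hy =>
    (contDiffAt_norm ℝ (hne y hy)).log (norm_ne_zero_iff.2 (hne y hy))
  have hBC : ∀ y ∈ K, ContDiffAt ℝ 2 B y := fun y hy =>
    contDiffAt_const.add (contDiffAt_const.mul (hlogC y hy))
  have hHC : ∀ y ∈ K, ContDiffAt ℝ 2 (HH κ w z) y := fun y hy =>
    contDiffAt_of_ball h.cH (hKX hy)
  have key := max_principle (f := fun y => HH κ w z y - B y) hKc
    (fun y hy => ((hHC y hy).continuousAt.sub (hBC y hy).continuousAt).continuousWithinAt)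
    (fun y hy => (hHC y (interior_subset hy)).sub (hBC y (interior_subset hy)))
    (by
      intro y hy _
      have hyK := interior_subset hy
      rw [lap_sub (hHC y hyK) (hBC y hyK), hB,
        lap_add contDiffAt_const (contDiffAt_const.mul (hlogC y hyK)), lap_const,
        lap_const_mul _ (hlogC y hyK), lap_log y (hne y hyK)]
      have := h.lapH_nonneg isOpen_ball hκ (hKX hyK)
      linarith)
    (by
      intro y hy hyi
      have hor : ‖y‖ = ρ ∨ ‖y‖ = R := by
        by_contra! hcon
        refine hyi (mem_interior_iff_mem_nhds.2 ?_)
        have hopen : IsOpen {y : R2 | ρ < ‖y‖ ∧ ‖y‖ < R} :=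
          (isOpen_lt continuous_const continuous_norm).inter
            (isOpen_lt continuous_norm continuous_const)
        refine mem_of_superset (hopen.mem_nhds ⟨lt_of_le_of_ne hy.1 hcon.1.symm,
          lt_of_le_of_ne hy.2 hcon.2⟩) fun y hy => ⟨hy.1.le, hy.2.le⟩
      rw [hBe y hy]
      rcases hor with hor | hor
      · rw [hor, div_self hρ.ne', Real.log_one]
        linarith [h1 y hor]
      · rw [hor, hc, div_mul_cancel₀ _ hL.ne']
        linarith [h2 y hor])
    y ⟨hy, hyR⟩
  rw [hBe y ⟨hy, hyR⟩] at key
  linarith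

end

/-! ### Local propagation of smallness -/

section
variable {κ : ℝ} {w z : R2 → ℝ}

/-- Outward continuation of the bound `w ≤ 1`: the logarithmic barrier shows that `H` grows by very
little over a distance `3`, and the decay lemma absorbs this growth over a distance `1`. -/
lemma LocSol.expand_one {X S M : ℝ} (h : LocSol κ w z (ball 0 X)) (hκ : 216 * 400 ≤ κ)
    (hS : 0 < S) (hSX : S ≤ X / 10) (hX : 30 ≤ X) (hM0 : 0 ≤ M)
    (hM : ∀ y : R2, ‖y‖ ≤ X / 5 → HH κ w z y ≤ M)
    (hrho : ∀ ρ, S ≤ ρ → ρ ≤ X / 10 → 3 * M ≤ 1 / 1600 * (ρ * Real.log (X / 5 / ρ)))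
    (h0 : ∀ y : R2, ‖y‖ ≤ S → w y ≤ 1) : ∀ y : R2, ‖y‖ ≤ X / 10 → w y ≤ 1 := by
  have hκ1 : 1 ≤ κ := by linarith
  have hκi : κ⁻¹ ≤ 1 / 1600 := by
    rw [one_div]; exact inv_anti₀ (by norm_num) (by linarith)
  have hκi0 : 0 ≤ κ⁻¹ := inv_nonneg.2 (by linarith)
  have hind : ∀ n : ℕ, ∀ y : R2, ‖y‖ ≤ min (S + n) (X / 10) → w y ≤ 1 := by
    intro n
    induction n with
    | zero => intro y hy; exact h0 y (by simpa using hy.trans (min_le_left _ _))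
    | succ n ih =>
      intro y hy
      set ρ := min (S + n) (X / 10) with hρ
      have hSρ : S ≤ ρ := le_min (by linarith [n.cast_nonneg (α := ℝ)]) hSX
      have hρX : ρ ≤ X / 10 := min_le_right _ _
      have hyρ : ‖y‖ ≤ ρ + 1 := by
        push_cast at hy
        rcases min_cases (S + n) (X / 10) with h' | h'
        · rw [hρ, h'.1]; linarith [hy.trans (min_le_left _ _)]
        · rw [hρ, h'.1]; linarith [hy.trans (min_le_right _ _)]
      have hρ0 : 0 < ρ := hS.trans_le hSρ
      have hL : 0 < Real.log (X / 5 / ρ) :=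
        Real.log_pos (by rw [lt_div_iff₀ hρ0]; linarith)
      have hball : ∀ x : R2, ‖x‖ ≤ ρ + 3 → x ∈ ball (0:R2) X := fun x hx =>
        mem_ball_zero_iff.2 (by linarith)
      have hH : ∀ x : R2, ‖x‖ ≤ ρ + 3 → w x ≤ 1 + 1 / 800 := by
        intro x hx
        by_cases hxρ : ‖x‖ ≤ ρ
        · linarith [ih x hxρ]
        · push Not at hxρ
          have hb := h.barrier hκ1 hρ0 (by linarith : ρ < X / 5) (by linarith)
            (by linarith : (0:ℝ) ≤ 1 + κ⁻¹)
            (fun y hy => by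
              have := h.H_le hκ1 (hball y (by linarith))
              linarith [ih y hy.le])
            (fun y hy => hM y hy.le) hxρ.le (by linarith)
          have hlog : Real.log (‖x‖ / ρ) ≤ 3 / ρ := by
            refine (Real.log_le_sub_one_of_pos (div_pos (by linarith) hρ0)).trans ?_
            rw [sub_le_iff_le_add, div_add_one hρ0.ne']
            gcongr; linarith
          have hinc : M / Real.log (X / 5 / ρ) * Real.log (‖x‖ / ρ) ≤ 1 / 1600 := by
            calc M / Real.log (X / 5 / ρ) * Real.log (‖x‖ / ρ)
                ≤ M / Real.log (X / 5 / ρ) * (3 / ρ) := by gcongr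
              _ = 3 * M / (ρ * Real.log (X / 5 / ρ)) := by field_simp
              _ ≤ 1 / 1600 := by
                rw [div_le_iff₀ (mul_pos hρ0 hL)]; exact hrho ρ hSρ hρX
          linarith [h.w_le_H hκ1 (hball x hx)]
      have hsub : ∀ x ∈ closedBall y 2, ‖x‖ ≤ ρ + 3 := by
        intro x hx
        rw [mem_closedBall, dist_eq_norm] at hx
        have : ‖x‖ ≤ ‖x - y‖ + ‖y‖ := by simpa using norm_add_le (x - y) y
        linarith
      have hd := h.decay isOpen_ball (b := 1 / 400) (by norm_num) le_rfl (by linarith)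
        (by norm_num) (fun x hx => hball x (hsub x hx)) (fun x hx => hH x (hsub x hx))
      refine hd.trans (max_le ?_ ?_) <;> norm_num
  intro y hy
  obtain ⟨n, hn⟩ := exists_nat_ge X
  exact hind n y (le_min (by linarith) hy)

/-- Iterating the decay lemma brings `w` from `1` down to `ε / 2`. -/
lemma LocSol.expand_two {X ε : ℝ} (h : LocSol κ w z (ball 0 X)) (hX : 0 < X) (hε : 0 < ε)
    (hε1 : ε ≤ 1) (hκ : 216 / (ε / 400) ≤ κ) (h0 : ∀ y : R2, ‖y‖ ≤ X / 10 → w y ≤ 1) (n : ℕ) :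
    ∀ y : R2, ‖y‖ ≤ X / 10 - 2 * n → w y ≤ max (1 - n * (ε / 400 / 2)) (ε / 2) := by
  induction n with
  | zero => intro y hy; exact le_max_of_le_left (by simpa using h0 y (by simpa using hy))
  | succ n ih =>
    intro y hy
    push_cast at hy ⊢
    have hn : (0:ℝ) ≤ n := n.cast_nonneg
    have hsub : ∀ x ∈ closedBall y 2, ‖x‖ ≤ X / 10 - 2 * n := by
      intro x hx
      rw [mem_closedBall, dist_eq_norm] at hx
      have : ‖x‖ ≤ ‖x - y‖ + ‖y‖ := by simpa using norm_add_le (x - y) y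
      linarith
    have hd := h.decay isOpen_ball (b := ε / 400) (by linarith) (by linarith) hκ
      (M1 := max (1 - n * (ε / 400 / 2)) (ε / 2))
      (max_le (by nlinarith) (by linarith))
      (fun x hx => mem_ball_zero_iff.2 (by linarith [hsub x hx])) (fun x hx => ih x (hsub x hx))
    refine hd.trans (max_le ?_ (le_max_of_le_right (by linarith)))
    rcases max_cases (1 - n * (ε / 400 / 2)) (ε / 2) with h' | h'
    · rw [h'.1]; exact le_max_of_le_left (by linarith)
    · rw [h'.1]; exact le_max_of_le_right (by linarith)

end

/-- Local propagation of smallness: on a large vortex-free disc with bounded energy, smallness of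
`w` at the centre spreads to a concentric disc of comparable size, with the same constant. -/
theorem local_expand {E : ℝ} (hE : 0 ≤ E) : ∃ ε₀ > 0, ∀ ε, 0 < ε → ε ≤ ε₀ →
    ∃ X₀ κ₀ : ℝ, ∀ X κ, X₀ ≤ X → κ₀ ≤ κ → ∀ w z : R2 → ℝ, LocSol κ w z (ball 0 X) →
      IntegrableOn (fun x => exp (-w x) * z x) (ball 0 X) →
      ∫ x in ball (0:R2) X, exp (-w x) * z x ≤ E → w 0 ≤ ε →
      ∀ y ∈ ball (0:R2) (X / 16), w y ≤ ε := by
  -- `A (1 + log X)` is the logarithmic growth bound; `S` makes the barrier's slope at radius `S`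
  -- small compared with the gain from one application of the decay lemma.
  set A := 64 / 3 * (2 + E / mass) with hA
  have hApos : 0 < A := by have := mass_pos; positivity
  set S := 19200 * A + 1 with hSdef
  have hS1 : 1 ≤ S := by linarith
  refine ⟨exp (-(4 * S ^ 2)) / 64, by positivity, fun ε hε hε0 => ?_⟩
  have hexp1 : exp (-(4 * S ^ 2)) ≤ 1 := exp_le_one_iff.2 (by nlinarith)
  obtain ⟨n, hn⟩ := exists_nat_ge (2 / (ε / 400))
  have ev : ∀ᶠ X : ℝ in atTop, 10 * S ≤ X ∧ 30 ≤ X ∧ 54 * n ≤ X ∧ 9 ≤ Real.log X ∧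
      9600 * A * (1 + Real.log X) ≤ X ^ (1 / 2 : ℝ) := by
    have e1 : Tendsto (fun X : ℝ => Real.log X) atTop atTop := Real.tendsto_log_atTop
    have e2 : (fun X : ℝ => 9600 * A * (1 + Real.log X)) =o[atTop]
        fun X : ℝ => X ^ (1 / 2 : ℝ) := by
      refine Asymptotics.IsLittleO.const_mul_left (Asymptotics.IsLittleO.add ?_
        (isLittleO_log_rpow_atTop (by norm_num))) _
      rw [Asymptotics.isLittleO_const_left]
      exact Or.inr (tendsto_norm_atTop_atTop.comp (tendsto_rpow_atTop (by norm_num)))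
    filter_upwards [eventually_ge_atTop (10 * S), eventually_ge_atTop 30,
      eventually_ge_atTop (54 * (n:ℝ)), e1.eventually_ge_atTop 9,
      e2.bound (zero_lt_one)] with X h1 h2 h3 h4 h5
    refine ⟨h1, h2, h3, h4, ?_⟩
    rw [one_mul, Real.norm_of_nonneg (by positivity), Real.norm_of_nonneg (by positivity)] at h5
    exact h5
  obtain ⟨X₀, hX₀⟩ := eventually_atTop.1 ev
  refine ⟨X₀, max (216 / (ε / 400)) (216 * 400), ?_⟩
  intro X κ hX hκ w z h hint hEn hw0 y hy
  obtain ⟨hXS, hX30, hXn, hXlog, hXA⟩ := hX₀ X hX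
  have hκε := (le_max_left _ _).trans hκ
  have hκ2 := (le_max_right _ _).trans hκ
  have hκ1 : 1 ≤ κ := by linarith
  have hκi : 2 * κ⁻¹ ≤ ε := by
    rw [div_le_iff₀ (by positivity)] at hκε
    rw [← div_eq_mul_inv, div_le_iff₀ (by linarith)]
    nlinarith
  have hε1 : ε ≤ 1 := by linarith
  have hsm : w 0 + 2 * κ⁻¹ ≤ 2 * ε := by linarith
  have hstart : ∀ y : R2, ‖y‖ ≤ S → w y ≤ 1 := by
    intro y hy
    have hyX : y ∈ ball (0:R2) X := mem_ball_zero_iff.2 (by linarith)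
    refine (h.w_le_H hκ1 hyX).trans ((h.start hκ1 (by linarith) (by linarith) hy).trans ?_)
    have e1 : 64 / 3 * (w 0 + 2 * κ⁻¹) * exp (4 * S ^ 2) ≤
        64 / 3 * (2 * (exp (-(4 * S ^ 2)) / 64)) * exp (4 * S ^ 2) := by
      gcongr; linarith
    have e2 : exp (-(4 * S ^ 2)) * exp (4 * S ^ 2) = 1 := by rw [← exp_add]; simp
    linarith
  have hone := h.expand_one hκ2 (by linarith) (by linarith) hX30
    (M := A * (1 + Real.log X)) (by positivity)
    (fun y hy => h.growth hκ1 (by linarith) hE hint hEn (by linarith) hy)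
    (by
      -- the logarithm of `X / 5 / ρ` beats `1 + log X` for `ρ ≤ √X`, the factor `ρ` beats it beyond
      intro ρ hSρ hρX
      have hρ0 : 0 < ρ := by linarith
      have hX0 : 0 < X := by linarith
      have hQ : (2:ℝ) ≤ X / 5 / ρ := by rw [le_div_iff₀ hρ0]; linarith
      set s := X ^ (1 / 2 : ℝ) with hs
      have hs0 : 0 < s := by positivity
      have hss : s * s = X := by rw [hs, ← rpow_add hX0]; norm_num
      have hlogs : Real.log s = 1 / 2 * Real.log X := by rw [hs, Real.log_rpow hX0]
      by_cases hρs : ρ ≤ s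
      · have e1 : s / 5 ≤ X / 5 / ρ := by
          rw [le_div_iff₀ hρ0, ← hss]; nlinarith
        have e2 := Real.log_le_log (by positivity) e1
        have hlog5 : Real.log 5 ≤ 2 := by
          rw [Real.log_le_iff_le_exp (by norm_num)]
          have h8 : exp (2 : ℝ) = exp 1 * exp 1 := by rw [← exp_add]; norm_num
          have := exp_one_gt_d9
          rw [h8]; nlinarith
        rw [Real.log_div hs0.ne' (by norm_num), hlogs] at e2
        have e3 : 1 / 4 * (1 + Real.log X) ≤ Real.log (X / 5 / ρ) := by linarith
        have e4 : S * (1 / 4 * (1 + Real.log X)) ≤ ρ * Real.log (X / 5 / ρ) := by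
          gcongr
        have e5 : 0 ≤ 1 + Real.log X := by linarith
        have e6 : S * (1 / 4 * (1 + Real.log X)) =
            4800 * (A * (1 + Real.log X)) + 1 / 4 * (1 + Real.log X) := by rw [hSdef]; ring
        linarith
      · push Not at hρs
        have e1 : 1 / 2 ≤ Real.log (X / 5 / ρ) := by
          have := Real.log_le_log (by norm_num) hQ
          linarith [Real.log_two_gt_d9]
        have e2 : s * (1 / 2) ≤ ρ * Real.log (X / 5 / ρ) := by
          gcongr
        linarith)
    hstart
  have htwo := h.expand_two (by linarith) hε hε1 hκε hone n y (by
    rw [mem_ball_zero_iff] at hy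
    linarith)
  refine htwo.trans (max_le ?_ (by linarith))
  rw [div_le_iff₀ (by positivity)] at hn
  linarith

/-! ### Lower bound near a vortex -/

/-- The weak maximum principle on the annulus `ρ ≤ |y| ≤ R`. -/
lemma annulus_max_principle {f : R2 → ℝ} {ρ R : ℝ}
    (hC : ∀ y : R2, ρ ≤ ‖y‖ → ‖y‖ ≤ R → ContDiffAt ℝ 2 f y)
    (hlap : ∀ y : R2, ρ ≤ ‖y‖ → ‖y‖ ≤ R → 0 < f y → 0 ≤ lap f y)
    (h1 : ∀ y : R2, ‖y‖ = ρ → f y ≤ 0) (h2 : ∀ y : R2, ‖y‖ = R → f y ≤ 0)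
    {y : R2} (hy : ρ ≤ ‖y‖) (hyR : ‖y‖ ≤ R) : f y ≤ 0 := by
  have hKc : IsCompact {y : R2 | ρ ≤ ‖y‖ ∧ ‖y‖ ≤ R} := by
    refine (isCompact_closedBall (0:R2) R).of_isClosed_subset ?_ fun y hy =>
      mem_closedBall_zero_iff.2 hy.2
    exact (isClosed_le continuous_const continuous_norm).inter
      (isClosed_le continuous_norm continuous_const)
  refine max_principle hKc (fun y hy => (hC y hy.1 hy.2).continuousAt.continuousWithinAt)
    (fun y hy => hC y (interior_subset hy).1 (interior_subset hy).2)
    (fun y hy => hlap y (interior_subset hy).1 (interior_subset hy).2) ?_ y ⟨hy, hyR⟩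
  intro y hy hyi
  by_contra hcon
  refine hyi (mem_interior_iff_mem_nhds.2 ?_)
  have hopen : IsOpen {y : R2 | ρ < ‖y‖ ∧ ‖y‖ < R} :=
    (isOpen_lt continuous_const continuous_norm).inter
      (isOpen_lt continuous_norm continuous_const)
  refine mem_of_superset (hopen.mem_nhds ⟨lt_of_le_of_ne hy.1 fun h => hcon (h1 y h.symm),
    lt_of_le_of_ne hy.2 fun h => hcon (h2 y h)⟩) fun y hy => ⟨hy.1.le, hy.2.le⟩

/-- The lower bound for `w` within distance `L` of a vortex. -/
def vortexBound (L : ℝ) : ℝ := 2 / 5 * (exp (-5 * L ^ 2) - exp (-20 * L ^ 2))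

lemma vortexBound_pos {L : ℝ} (hL : 0 < L) : 0 < vortexBound L := by
  have : exp (-20 * L ^ 2) < exp (-5 * L ^ 2) := exp_lt_exp.2 (by nlinarith [pow_pos hL 2])
  unfold vortexBound; linarith

/-- Near a vortex (placed at the origin, in rescaled coordinates) `w` is bounded below: the
logarithmic pole together with `ΔH ≤ 1` gives `H ≥ 2/5` for `|y| ≤ 1/2`, and a Hopf-type barrier
for `ΔY ≤ Y` carries this to `|y| ≤ L`. -/
lemma near_vortex {κ R0 L c δ : ℝ} {w z v : R2 → ℝ} (h : LocSol κ w z (ball 0 R0 \ {0}))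
    (hκ : 1 ≤ κ) (hL : 1 ≤ L) (hR : 2 * L < R0) (hδ : 0 < δ) (hc : 2 ≤ c)
    (hv : ContinuousAt v 0)
    (hwv : ∀ y : R2, y ≠ 0 → ‖y‖ < δ → w y = v y - c * Real.log ‖y‖)
    {y : R2} (hy0 : y ≠ 0) (hy : ‖y‖ ≤ L) : vortexBound L ≤ w y + 2 * κ⁻¹ := by
  have hU : IsOpen (ball (0:R2) R0 \ {0}) := isOpen_ball.sdiff isClosed_singleton
  have hmem : ∀ x : R2, 0 < ‖x‖ → ‖x‖ ≤ 2 * L → x ∈ ball (0:R2) R0 \ {0} := fun x hx hx2 =>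
    ⟨mem_ball_zero_iff.2 (hx2.trans_lt hR), norm_pos_iff.1 hx⟩
  -- Close to the vortex `w ≥ -log |x|`.
  obtain ⟨η, hη, hpole⟩ : ∃ η > 0, ∀ x : R2, x ≠ 0 → ‖x‖ < η → -Real.log ‖x‖ ≤ w x := by
    obtain ⟨η, hη, hvb⟩ := Metric.continuousAt_iff.1 hv 1 one_pos
    refine ⟨min (min η δ) (exp (-(1 + |v 0|))), by positivity, fun x hx0 hx => ?_⟩
    have h1 : ‖x‖ < η := hx.trans_le ((min_le_left _ _).trans (min_le_left _ _))
    have h2 : ‖x‖ < δ := hx.trans_le ((min_le_left _ _).trans (min_le_right _ _))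
    have h3 : ‖x‖ < exp (-(1 + |v 0|)) := hx.trans_le (min_le_right _ _)
    have h4 : |v x - v 0| < 1 := hvb (by rwa [dist_zero_right])
    have h5 : Real.log ‖x‖ < -(1 + |v 0|) := (Real.log_lt_iff_lt_exp (norm_pos_iff.2 hx0)).2 h3
    rw [hwv x hx0 h2]
    have h6 := neg_abs_le (v 0)
    have h7 := abs_lt.1 h4
    nlinarith [abs_nonneg (v 0)]
  have hHC : ∀ x : R2, 0 < ‖x‖ → ‖x‖ ≤ 2 * L → ContDiffAt ℝ 2 (HH κ w z) x := fun x h1 h2 =>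
    h.cH.contDiffAt (hU.mem_nhds (hmem x h1 h2))
  have hYC : ∀ x : R2, 0 < ‖x‖ → ‖x‖ ≤ 2 * L → ContDiffAt ℝ 2 (YY κ w z) x := fun x h1 h2 =>
    h.cY.contDiffAt (hU.mem_nhds (hmem x h1 h2))
  have hlogC : ∀ x : R2, 0 < ‖x‖ → ContDiffAt ℝ 2 (fun y : R2 => Real.log ‖y‖) x := fun x hx =>
    (contDiffAt_norm ℝ (norm_pos_iff.1 hx)).log hx.ne'
  have hinner : ∀ x : R2, x ≠ 0 → ‖x‖ ≤ 1 / 2 → 2 / 5 ≤ HH κ w z x := by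
    intro x hx0 hx
    have hxp := norm_pos_iff.2 hx0
    have hsq : ∀ t : R2, ContDiffAt ℝ 2 (fun y : R2 => 1 / 4 * ‖y - 0‖ ^ 2) t := fun t =>
      contDiffAt_const.mul (contDiff_normSq 0).contDiffAt
    have hlog1 : ∀ t : R2, 0 < ‖t‖ → ContDiffAt ℝ 2 (fun y : R2 => (-1) * Real.log ‖y‖) t :=
      fun t ht => contDiffAt_const.mul (hlogC t ht)
    set τ := min ‖x‖ (η / 2) with hτ
    have hτ0 : 0 < τ := by positivity
    have key := annulus_max_principle (ρ := τ) (R := 1) (y := x)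
      (f := fun y => (((-1) * Real.log ‖y‖ + 1 / 4 * ‖y - 0‖ ^ 2) - 1 / 4) - HH κ w z y)
      (fun y h1 h2 => ((((hlog1 y (hτ0.trans_le h1)).add (hsq y)).sub contDiffAt_const)).sub
        (hHC y (hτ0.trans_le h1) (by linarith)))
      (fun y h1 h2 _ => by
        have hyp := hτ0.trans_le h1
        have hyU := hmem y hyp (by linarith)
        rw [lap_sub (((hlog1 y hyp).add (hsq y)).sub contDiffAt_const)
            (hHC y hyp (by linarith)), lap_sub ((hlog1 y hyp).add (hsq y)) contDiffAt_const,
          lap_add (hlog1 y hyp) (hsq y), lap_const_mul _ (hlogC y hyp),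
          lap_log y (norm_pos_iff.1 hyp), lap_const_mul_normSq, lap_const, h.lapH hU hκ hyU]
        have e1 : exp (-w y) ≤ 1 := exp_le_one_iff.2 (by linarith [h.w0 y hyU])
        nlinarith [h.z0 y hyU, h.z1 y hyU, exp_pos (-w y)])
      (fun y hyτ => by
        have hyp : 0 < ‖y‖ := by rw [hyτ]; exact hτ0
        have h1 := hpole y (norm_pos_iff.1 hyp) (by
          rw [hyτ]; linarith [min_le_right ‖x‖ (η / 2)])
        have hy1 : ‖y‖ ≤ 1 := by rw [hyτ]; linarith [min_le_left ‖x‖ (η / 2)]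
        have h2 := h.w_le_H hκ (hmem y hyp (by linarith))
        rw [sub_zero]
        nlinarith)
      (fun y hy1 => by
        have h2 := h.H0 hκ (hmem y (by linarith) (by linarith))
        rw [sub_zero, hy1, Real.log_one]
        linarith)
      (min_le_left _ _) (by linarith)
    have h3 : Real.log ‖x‖ ≤ Real.log (1 / 2) := Real.log_le_log hxp hx
    rw [one_div, Real.log_inv] at h3
    have := Real.log_two_gt_d9
    have h4 : 0 ≤ 1 / 4 * ‖x - 0‖ ^ 2 := by positivity
    linarith
  have hyp := norm_pos_iff.2 hy0
  refine le_trans ?_ (h.Y_le hκ (hmem y hyp (by linarith)))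
  have hvb : vortexBound L ≤ 2 / 5 := by
    have : exp (-5 * L ^ 2) ≤ 1 := exp_le_one_iff.2 (by nlinarith)
    unfold vortexBound; linarith [exp_pos (-20 * L ^ 2)]
  by_cases hy2 : ‖y‖ ≤ 1 / 2
  · linarith [hinner y hy0 hy2, h.H_le_Y (hmem y hyp (by linarith))]
  push Not at hy2
  have hgC : ∀ t : R2, ContDiffAt ℝ 2 (fun y : R2 => exp (-5 * ‖y‖ ^ 2)) t := fun t => by
    have := (contDiff_normSq (n := 2) 0).contDiffAt (x := t)
    simp only [sub_zero] at this
    exact (contDiffAt_const.mul this).exp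
  have hgC' : ∀ t : R2, ContDiffAt ℝ 2 (fun y : R2 => exp (-5 * ‖y‖ ^ 2) - exp (-20 * L ^ 2)) t :=
    fun t => (hgC t).sub contDiffAt_const
  have key := annulus_max_principle (ρ := 1 / 2) (R := 2 * L) (y := y)
    (f := fun y => 2 / 5 * (exp (-5 * ‖y‖ ^ 2) - exp (-20 * L ^ 2)) - YY κ w z y)
    (fun y h1 h2 => (contDiffAt_const.mul (hgC' y)).sub (hYC y (by linarith) h2))
    (fun y h1 h2 hpos => by
      have hyU := hmem y (by linarith) h2
      rw [lap_sub (contDiffAt_const.mul (hgC' y)) (hYC y (by linarith) h2),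
        lap_const_mul _ (hgC' y), lap_sub (hgC y) contDiffAt_const, lap_const, lap_gauss]
      have h3 := h.lapY_le hU hκ hyU
      have h4 : (1:ℝ) ≤ 4 * 5 ^ 2 * ‖y‖ ^ 2 - 4 * 5 := by nlinarith
      have h5 := mul_le_mul_of_nonneg_right h4 (exp_pos (-5 * ‖y‖ ^ 2)).le
      linarith [exp_pos (-20 * L ^ 2)])
    (fun y hy1 => by
      have h1 := hinner y (norm_pos_iff.1 (by rw [hy1]; norm_num)) hy1.le
      have h2 := h.H_le_Y (hmem y (by rw [hy1]; norm_num) (by rw [hy1]; linarith))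
      have : exp (-5 * ‖y‖ ^ 2) ≤ 1 := exp_le_one_iff.2 (by nlinarith [sq_nonneg ‖y‖])
      linarith [exp_pos (-20 * L ^ 2)])
    (fun y hy1 => by
      have hyU := hmem y (by rw [hy1]; linarith) hy1.le
      have h2 := (h.H0 hκ hyU).trans (h.H_le_Y hyU)
      rw [hy1, show (-5 : ℝ) * (2 * L) ^ 2 = -20 * L ^ 2 by ring]
      linarith)
    hy2.le (by linarith)
  have hmono : exp (-5 * L ^ 2) ≤ exp (-5 * ‖y‖ ^ 2) := exp_le_exp.2 (by nlinarith)
  unfold vortexBound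
  linarith

/-! ### Periodicity and the geometry of the singular set -/

namespace VortexData

open scoped Pointwise

variable (D : VortexData)

/-- The generators of the lattice, as a basis of the plane. -/
def basis : Module.Basis (Fin 2) ℝ R2 :=
  basisOfLinearIndependentOfCardEqFinrank D.indep (by simp)

/-- The half-open fundamental domain `{t₁a₁ + t₂a₂ : 0 ≤ t₁, t₂ < 1}`. -/
def F : Set R2 := ZSpan.fundamentalDomain D.basis

lemma basis_zero : D.basis 0 = D.a1 := by simp [basis]
lemma basis_one : D.basis 1 = D.a2 := by simp [basis]

lemma mem_lattice {w : R2} :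
    w ∈ lattice D.a1 D.a2 ↔ w ∈ Submodule.span ℤ (Set.range D.basis) := by
  rw [D.basis.mem_span_iff_repr_mem ℤ]
  constructor
  · rintro ⟨k, l, rfl⟩ i
    rw [← D.basis_zero, ← D.basis_one]
    fin_cases i
    · exact ⟨k, by simp⟩
    · exact ⟨l, by simp⟩
  · intro h
    obtain ⟨k, hk⟩ := h 0
    obtain ⟨l, hl⟩ := h 1
    refine ⟨k, l, ?_⟩
    have := D.basis.sum_repr w
    rw [Fin.sum_univ_two, ← hk, ← hl, D.basis_zero, D.basis_one] at this
    exact this.symm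

lemma mem_cell {x : R2} : x ∈ cell D.a1 D.a2 ↔ ∀ i, D.basis.repr x i ∈ Ioo (0:ℝ) 1 := by
  constructor
  · rintro ⟨t1, t2, h1, h2, rfl⟩ i
    rw [← D.basis_zero, ← D.basis_one]
    fin_cases i
    · simpa using h1
    · simpa using h2
  · intro h
    refine ⟨_, _, h 0, h 1, ?_⟩
    have := D.basis.sum_repr x
    rw [Fin.sum_univ_two, D.basis_zero, D.basis_one] at this
    exact this.symm

lemma cell_subset_F : cell D.a1 D.a2 ⊆ D.F := fun _ hx i =>
  Ioo_subset_Ico_self (D.mem_cell.1 hx i)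

lemma isOpen_cell : IsOpen (cell D.a1 D.a2) := by
  have : cell D.a1 D.a2 = ⋂ i, (fun x => D.basis.repr x i) ⁻¹' Ioo (0:ℝ) 1 := by
    ext x; simp [mem_cell]
  rw [this]
  refine isOpen_iInter_of_finite fun i => isOpen_Ioo.preimage ?_
  exact (D.basis.coord i).continuous_of_finiteDimensional

lemma isBounded_F : Bornology.IsBounded D.F := ZSpan.fundamentalDomain_isBounded _

lemma exists_add_mem_F (x : R2) : ∃ w ∈ lattice D.a1 D.a2, x + w ∈ D.F := by
  refine ⟨-(ZSpan.floor D.basis x : R2), D.mem_lattice.2 ?_, ?_⟩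
  · exact neg_mem (ZSpan.floor D.basis x).2
  · rw [← sub_eq_add_neg, ← ZSpan.fract_apply]
    exact ZSpan.fract_mem_fundamentalDomain _ _

lemma lattice_neg {w : R2} (hw : w ∈ lattice D.a1 D.a2) : -w ∈ lattice D.a1 D.a2 := by
  rw [mem_lattice] at *; exact neg_mem hw

lemma lattice_add {v w : R2} (hv : v ∈ lattice D.a1 D.a2) (hw : w ∈ lattice D.a1 D.a2) :
    v + w ∈ lattice D.a1 D.a2 := by
  rw [mem_lattice] at *; exact add_mem hv hw

lemma lattice_zero : (0 : R2) ∈ lattice D.a1 D.a2 := by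
  rw [mem_lattice]; exact zero_mem _

lemma add_mem_sing {x w : R2} (hw : w ∈ lattice D.a1 D.a2) : x + w ∈ D.sing ↔ x ∈ D.sing := by
  constructor
  · rintro ⟨i, v, hv, h⟩
    refine ⟨i, v + -w, D.lattice_add hv (D.lattice_neg hw), ?_⟩
    rw [← add_assoc, ← h]; simp
  · rintro ⟨i, v, hv, rfl⟩
    exact ⟨i, v + w, D.lattice_add hv hw, by rw [add_assoc]⟩

lemma cell_inter_sing {x : R2} (hx : x ∈ cell D.a1 D.a2) (hs : x ∈ D.sing) :
    x ∈ Set.range D.p := by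
  obtain ⟨i, w, hw, rfl⟩ := hs
  refine ⟨i, ?_⟩
  have hp := D.mem_cell.1 (D.p_mem i)
  rw [mem_cell] at hx
  rw [mem_lattice, D.basis.mem_span_iff_repr_mem ℤ] at hw
  have : w = 0 := by
    refine D.basis.ext_elem fun j => ?_
    obtain ⟨k, hk⟩ := hw j
    have h1 := hx j
    have h2 := hp j
    rw [map_add, Finsupp.add_apply, ← hk] at h1
    simp only [algebraMap_int_eq, eq_intCast, mem_Ioo] at h1 h2
    have h3 : (k : ℝ) < 1 := by linarith
    have h4 : (-1 : ℝ) < k := by linarith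
    have h5 : k < 1 := by exact_mod_cast h3
    have h6 : -1 < k := by exact_mod_cast h4
    have h7 : k = 0 := by omega
    rw [← hk, h7]; simp
  rw [this, add_zero]

lemma finite_sing_inter {B : Set R2} (hB : Bornology.IsBounded B) : (B ∩ D.sing).Finite := by
  have h1 : ∀ i, ({w | D.p i + w ∈ B} ∩ lattice D.a1 D.a2).Finite := by
    intro i
    have hb : Bornology.IsBounded {w | D.p i + w ∈ B} := by
      have : {w | D.p i + w ∈ B} = (-D.p i) +ᵥ B := by
        ext w; rw [Set.mem_vadd_set_iff_neg_vadd_mem]; simp [vadd_eq_add]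
      rw [this]; exact hB.vadd _
    refine (ZSpan.setFinite_inter D.basis hb).subset ?_
    exact fun w hw => ⟨hw.1, D.mem_lattice.1 hw.2⟩
  refine (Set.finite_iUnion fun i => (h1 i).image fun w => D.p i + w).subset ?_
  rintro x ⟨hx, i, w, hw, rfl⟩
  exact mem_iUnion.2 ⟨i, w, ⟨hx, hw⟩, rfl⟩

/-- The singular set is discrete and closed: around any point there is a disc containing no
singular point other than possibly its centre. -/
lemma sing_isolated (x : R2) : ∃ r > 0, ∀ s ∈ D.sing, dist s x < r → s = x := by
  have hfin : ((ball x 1 ∩ D.sing) \ {x}).Finite :=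
    (D.finite_sing_inter isBounded_ball).subset sdiff_subset
  have hmem : ((ball x 1 ∩ D.sing) \ {x})ᶜ ∈ nhds x :=
    hfin.isClosed.isOpen_compl.mem_nhds (by simp)
  obtain ⟨r, hr, hr'⟩ := Metric.mem_nhds_iff.1 hmem
  refine ⟨min r 1, by positivity, fun s hs hsx => ?_⟩
  by_contra hne
  exact hr' (mem_ball.2 (hsx.trans_le (min_le_left _ _)))
    ⟨⟨mem_ball.2 (hsx.trans_le (min_le_right _ _)), hs⟩, hne⟩

lemma isOpen_sing_compl : IsOpen D.singᶜ := by
  refine Metric.isOpen_iff.2 fun x hx => ?_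
  obtain ⟨r, hr, h⟩ := D.sing_isolated x
  exact ⟨r, hr, fun y hy hys => hx (h y hys hy ▸ hys)⟩

lemma isClosed_sing : IsClosed D.sing := isOpen_compl_iff.1 D.isOpen_sing_compl

lemma countable_sing : D.sing.Countable := by
  have : D.sing ⊆ ⋃ n : ℕ, ball (0:R2) n ∩ D.sing := by
    rw [← iUnion_inter, iUnion_ball_nat, univ_inter]
  exact (countable_iUnion fun n => (D.finite_sing_inter isBounded_ball).countable).mono this

lemma isConnected_sing_compl : IsConnected D.singᶜ :=
  D.countable_sing.isConnected_compl_of_one_lt_rank (by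
    rw [← Module.finrank_eq_rank, finrank_euclideanSpace, Fintype.card_fin]; norm_num)

/-- A continuous periodic function attains its maximum. -/
lemma exists_max {f : R2 → ℝ} (hf : Continuous f) (hp : Periodic2 D.a1 D.a2 f) :
    ∃ x0, ∀ x, f x ≤ f x0 := by
  obtain ⟨w, hw, h0⟩ := D.exists_add_mem_F 0
  obtain ⟨x0, -, hx0⟩ := D.isBounded_F.isCompact_closure.exists_isMaxOn ⟨_, subset_closure h0⟩
    hf.continuousOn
  refine ⟨x0, fun x => ?_⟩
  obtain ⟨w, hw, hx⟩ := D.exists_add_mem_F x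
  rw [← hp x w hw]
  exact hx0 (subset_closure hx)

lemma isFund : IsAddFundamentalDomain (Submodule.span ℤ (Set.range D.basis)) D.F volume :=
  ZSpan.isAddFundamentalDomain D.basis volume

lemma measurableSet_F : MeasurableSet D.F := ZSpan.fundamentalDomain_measurableSet _

lemma integrableOn_F {f : R2 → ℝ} (hf : Continuous f) (t : R2) : IntegrableOn f (t +ᵥ D.F) := by
  refine IntegrableOn.mono_set (hf.continuousOn.integrableOn_compact
    (D.isBounded_F.vadd t).isCompact_closure) subset_closure

lemma integrableOn_F' {f : R2 → ℝ} (hf : Continuous f) : IntegrableOn f D.F := by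
  have := D.integrableOn_F hf 0
  rwa [zero_vadd] at this

/-- The integral of a periodic function over a translated fundamental domain. -/
lemma setIntegral_vadd {f : R2 → ℝ} (hp : Periodic2 D.a1 D.a2 f) (t : R2) :
    ∫ x in t +ᵥ D.F, f x = ∫ x in D.F, f x := by
  have : VAddInvariantMeasure (Submodule.span ℤ (Set.range D.basis)) R2 volume :=
    ⟨fun c s _ => measure_preimage_add volume (c : R2) s⟩
  refine (D.isFund.vadd_of_comm t).setIntegral_eq D.isFund fun g x => ?_
  have := hp x g (D.mem_lattice.2 g.2)
  rwa [add_comm] at this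

lemma setIntegral_add {f : R2 → ℝ} (hp : Periodic2 D.a1 D.a2 f) (t : R2) :
    ∫ x in D.F, f (x + t) = ∫ x in D.F, f x := by
  rw [← D.setIntegral_vadd hp t, ← image_vadd,
    (measurePreserving_vadd t volume).setIntegral_image_emb (measurableEmbedding_const_vadd t)]
  simp [vadd_eq_add, add_comm]

/-- Discs of a fixed small radius carry at most the mass of one period cell. -/
lemma exists_radius : ∃ r0 > 0, ∀ f : R2 → ℝ, Continuous f → Periodic2 D.a1 D.a2 f →
    (∀ x, 0 ≤ f x) → ∀ x r, r ≤ r0 → ∫ y in ball x r, f y ≤ ∫ y in D.F, f y := by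
  have hc : (1/2 : ℝ) • D.a1 + (1/2 : ℝ) • D.a2 ∈ cell D.a1 D.a2 :=
    ⟨1/2, 1/2, by norm_num, by norm_num, rfl⟩
  set c := (1/2 : ℝ) • D.a1 + (1/2 : ℝ) • D.a2
  obtain ⟨r0, hr0, hsub⟩ := Metric.isOpen_iff.1 D.isOpen_cell c hc
  refine ⟨r0, hr0, fun f hf hp h0 x r hr => ?_⟩
  rw [← D.setIntegral_vadd hp (x - c)]
  refine setIntegral_mono_set (D.integrableOn_F hf _) (Eventually.of_forall h0)
    (LE.le.eventuallyLE fun y hy => ?_)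
  rw [Set.mem_vadd_set_iff_neg_vadd_mem]
  refine D.cell_subset_F (hsub ?_)
  rw [mem_ball, dist_eq_norm] at *
  rw [vadd_eq_add, show -(x - c) + y - c = y - x by abel]
  exact hy.trans_le hr

/-- Differentiate the constant function `t ↦ ∫ g(x + t e)` over a period cell at `t = 0`. -/
lemma integral_deriv_eq_zero {g : R2 → ℝ} (hg : ContDiff ℝ 1 g) (hp : Periodic2 D.a1 D.a2 g)
    (e : R2) : ∫ x in D.F, fderiv ℝ g x e = 0 := by
  have hgd : Differentiable ℝ g := hg.differentiable (by norm_num)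
  have hcd : Continuous fun x => fderiv ℝ g x e :=
    (hg.continuous_fderiv (by norm_num)).clm_apply continuous_const
  have hcompact : IsCompact (closure (cthickening ‖e‖ D.F)) :=
    D.isBounded_F.cthickening.isCompact_closure
  obtain ⟨B, hB⟩ := hcompact.exists_bound_of_continuousOn hcd.continuousOn
  have hder := hasDerivAt_integral_of_dominated_loc_of_deriv_le
    (μ := volume.restrict D.F) (F := fun t x => g (x + t • e)) (x₀ := (0:ℝ)) (s := ball 0 1)
    (F' := fun t x => fderiv ℝ g (x + t • e) e) (bound := fun _ => B)
    (isOpen_ball.mem_nhds (by simp))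
    (Eventually.of_forall fun t => (hg.continuous.comp (by fun_prop)).aestronglyMeasurable)
    (by
      simp only [zero_smul, add_zero]
      exact (hg.continuous.continuousOn.integrableOn_compact
        D.isBounded_F.isCompact_closure).mono_set subset_closure)
    (hcd.comp (by fun_prop)).aestronglyMeasurable
    (by
      refine (ae_restrict_iff' D.measurableSet_F).2 (Eventually.of_forall fun x hx t ht => ?_)
      refine hB _ (subset_closure ?_)
      refine mem_cthickening_of_dist_le _ x _ _ hx ?_
      rw [dist_eq_norm, add_sub_cancel_left, norm_smul]
      have : ‖t‖ ≤ 1 := (mem_ball_zero_iff.1 ht).le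
      nlinarith [norm_nonneg e])
    (by
      have hv := (D.isBounded_F.measure_lt_top (μ := volume))
      exact integrable_const_iff.2 (Or.inr ⟨by simpa using hv⟩))
    (Eventually.of_forall fun x t ht => by
      have h1 : HasDerivAt (fun t : ℝ => x + t • e) e t := by
        simpa using ((hasDerivAt_id t).smul_const e).const_add x
      exact (hgd (x + t • e)).hasFDerivAt.comp_hasDerivAt t h1)
  have hconst : (fun t : ℝ => ∫ x in D.F, g (x + t • e)) = fun _ => ∫ x in D.F, g x :=
    funext fun t => D.setIntegral_add hp (t • e)
  have h2 := hder.2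
  rw [hconst] at h2
  have h3 := h2.unique (hasDerivAt_const (0:ℝ) _)
  simpa using h3

lemma fderiv_periodic {g : R2 → ℝ} (hp : Periodic2 D.a1 D.a2 g) (e : R2) :
    Periodic2 D.a1 D.a2 fun x => fderiv ℝ g x e := by
  intro x w hw
  have : (fun y => g (y + w)) = g := funext fun y => hp y w hw
  simp only
  rw [← fderiv_comp_add_right, this]

/-- The Laplacian of a periodic function has integral zero over a period cell. -/
lemma integral_lap_eq_zero {v : R2 → ℝ} (hv : ContDiff ℝ 2 v) (hp : Periodic2 D.a1 D.a2 v) :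
    ∫ x in D.F, lap v x = 0 := by
  have h1 : ∀ e : R2, ContDiff ℝ 1 fun x => fderiv ℝ v x e := fun e =>
    (hv.fderiv_right (by norm_num)).clm_apply contDiff_const
  unfold lap
  rw [integral_finsetSum]
  · exact Finset.sum_eq_zero fun i _ =>
      D.integral_deriv_eq_zero (h1 _) (D.fderiv_periodic hp _) _
  · intro i _
    have hc := ((h1 (EuclideanSpace.single i 1)).continuous_fderiv (by norm_num)).clm_apply
      (continuous_const (y := EuclideanSpace.single i (1:ℝ)))
    have := D.integrableOn_F hc 0
    rwa [zero_vadd] at this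

end VortexData

/-! ### A priori bounds, rescaling and energy -/

lemma two_le_smooth : (2 : WithTop ℕ∞) ≤ ((⊤ : ℕ∞) : WithTop ℕ∞) :=
  WithTop.coe_le_coe.2 (le_top : (2 : ℕ∞) ≤ ⊤)

lemma lap_neg {f : R2 → ℝ} {x : R2} (hf : ContDiffAt ℝ 2 f x) :
    lap (fun y => -f y) x = -lap f x := by
  have := lap_const_mul (-1) hf
  simpa using this

section
variable {D : VortexData} {lam mu : ℝ} {u N : R2 → ℝ}

lemma expu_of_mem {x : R2} (hx : x ∈ D.sing) : D.expu u x = 0 := if_pos hx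
lemma expu_of_notMem {x : R2} (hx : x ∉ D.sing) : D.expu u x = exp (u x) := if_neg hx

lemma expu_nonneg (x : R2) : 0 ≤ D.expu u x := by
  by_cases hx : x ∈ D.sing
  · rw [expu_of_mem hx]
  · rw [expu_of_notMem hx]; positivity

namespace IsMCSSolution

lemma u_at (h : IsMCSSolution D lam mu u N) {x : R2} (hx : x ∉ D.sing) : ContDiffAt ℝ 2 u x :=
  (h.2.2.1.contDiffAt (D.isOpen_sing_compl.mem_nhds hx)).of_le two_le_smooth

lemma N_cd (h : IsMCSSolution D lam mu u N) : ContDiff ℝ 2 N := h.2.2.2.1.of_le two_le_smooth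

/-- The logarithmic behaviour at an arbitrary point of `Z + Λ`, by periodicity. -/
lemma log_structure (h : IsMCSSolution D lam mu u N) (i : Fin D.n) {w : R2}
    (hw : w ∈ lattice D.a1 D.a2) :
    ∃ ε > (0:ℝ), ∃ v : R2 → ℝ, ContDiffOn ℝ 2 v (ball (D.p i + w) ε) ∧
      ∀ x ∈ ball (D.p i + w) ε, x ≠ D.p i + w →
        u x = v x + 2 * (D.m i : ℝ) * Real.log ‖x - (D.p i + w)‖ := by
  obtain ⟨ε, hε, v, hv, huv⟩ := h.2.2.2.2.1 i
  have hmap : ∀ x ∈ ball (D.p i + w) ε, x + -w ∈ ball (D.p i) ε := by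
    intro x hx
    rw [mem_ball, dist_eq_norm] at *
    rwa [show x + -w - D.p i = x - (D.p i + w) by abel]
  refine ⟨ε, hε, fun x => v (x + -w), ?_, fun x hx hne => ?_⟩
  · exact (hv.of_le two_le_smooth).comp
      (contDiff_id.add contDiff_const).contDiffOn hmap
  · rw [← h.1 x (-w) (D.lattice_neg hw), huv _ (hmap x hx)]
    · rw [show x + -w - D.p i = x - (D.p i + w) by abel]
    · intro heq
      exact hne (by rw [← heq]; abel)

lemma expu_periodic (h : IsMCSSolution D lam mu u N) : Periodic2 D.a1 D.a2 (D.expu u) := by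
  intro x w hw
  by_cases hx : x ∈ D.sing
  · rw [expu_of_mem hx, expu_of_mem ((D.add_mem_sing hw).2 hx)]
  · rw [expu_of_notMem hx, expu_of_notMem (mt (D.add_mem_sing hw).1 hx), h.1 x w hw]

lemma expu_continuous (h : IsMCSSolution D lam mu u N) : Continuous (D.expu u) := by
  rw [continuous_iff_continuousAt]
  intro x
  by_cases hx : x ∈ D.sing
  · have hx' := hx
    obtain ⟨i, w, hw, rfl⟩ := hx'
    set s := D.p i + w
    obtain ⟨ε, hε, v, hv, huv⟩ := h.log_structure i hw
    obtain ⟨r, hr, hiso⟩ := D.sing_isolated s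
    have hcont : ContinuousAt (fun x => exp (v x) * ‖x - s‖ ^ (2 * D.m i)) s := by
      refine ((hv.contDiffAt (ball_mem_nhds _ hε)).continuousAt.rexp).mul ?_
      fun_prop
    refine hcont.congr ?_
    filter_upwards [ball_mem_nhds s hε, ball_mem_nhds s hr] with y hy1 hy2
    by_cases hys : y = s
    · rw [hys, expu_of_mem hx, sub_self, norm_zero, zero_pow, mul_zero]
      have := D.m_pos i; omega
    · rw [expu_of_notMem fun hy => hys (hiso y hy hy2), huv y hy1 hys, exp_add]
      have hpos : 0 < ‖y - s‖ := norm_pos_iff.2 (sub_ne_zero.2 hys)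
      rw [show 2 * (D.m i : ℝ) * Real.log ‖y - s‖ = ((2 * D.m i : ℕ) : ℝ) * Real.log ‖y - s‖ by
        push_cast; ring, exp_nat_mul, exp_log hpos]
  · refine (h.u_at hx).continuousAt.rexp.congr ?_
    filter_upwards [D.isOpen_sing_compl.mem_nhds hx] with y hy
    rw [expu_of_notMem hy]

/-- The a priori bounds `eᵘ ≤ 1` and `0 ≤ N ≤ λ`, from the maximum principle on the torus. -/
lemma bounds (h : IsMCSSolution D lam mu u N) (hl : 0 < lam) (hm : 0 < mu) :
    (∀ x, D.expu u x ≤ 1) ∧ (∀ x, 0 ≤ N x) ∧ ∀ x, N x ≤ lam := by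
  obtain ⟨x0, hx0⟩ := D.exists_max h.expu_continuous h.expu_periodic
  obtain ⟨x1, hx1⟩ := D.exists_max h.N_cd.continuous h.2.1
  obtain ⟨x2, hx2⟩ := D.exists_max h.N_cd.continuous.neg (fun x w hw => by
    simp only [Pi.neg_apply, h.2.1 x w hw])
  simp only [Pi.neg_apply, neg_le_neg_iff] at hx2
  set T := D.expu u x0 with hT
  have hTpos : 0 < T := by
    obtain ⟨y, hy⟩ := D.isConnected_sing_compl.nonempty
    refine lt_of_lt_of_le ?_ (hx0 y)
    rw [expu_of_notMem hy]; positivity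
  have hx0s : x0 ∉ D.sing := fun hs => by rw [hT, expu_of_mem hs] at hTpos; exact lt_irrefl _ hTpos
  have h0 : lap u x0 ≤ 0 := by
    refine lap_nonpos_of_isLocalMax (h.u_at hx0s) ?_
    filter_upwards [D.isOpen_sing_compl.mem_nhds hx0s] with y hy
    have := hx0 y
    rwa [hT, expu_of_notMem hx0s, expu_of_notMem hy, exp_le_exp] at this
  rw [h.2.2.2.2.2.1 x0 hx0s, ← expu_of_notMem hx0s, ← hT] at h0
  have hN0 : lam * T ≤ N x0 := by
    have : mu * (lam * T) ≤ mu * N x0 := by linarith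
    exact le_of_mul_le_mul_left this hm
  have h1 : lap N x1 ≤ 0 :=
    lap_nonpos_of_isLocalMax h.N_cd.contDiffAt (Eventually.of_forall hx1)
  rw [h.2.2.2.2.2.2 x1] at h1
  set e1 := D.expu u x1
  have he1 : 0 ≤ e1 := expu_nonneg x1
  have hpos1 : 0 < mu + lam * e1 := by positivity
  have h1' : (mu + lam * e1) * N x1 ≤ lam * ((mu + lam) * e1) := by
    refine le_of_mul_le_mul_left (a := mu) ?_ hm
    linarith
  have h1'' : (mu + lam * e1) * T ≤ (mu + lam) * e1 := by
    refine le_of_mul_le_mul_left (a := lam) ?_ hl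
    have := mul_le_mul_of_nonneg_left (hN0.trans (hx1 x0)) hpos1.le
    linarith
  have he1pos : 0 < e1 := by
    have : 0 < (mu + lam) * e1 := lt_of_lt_of_le (by positivity) h1''
    exact pos_of_mul_pos_right this (by positivity)
  have hT1 : T ≤ 1 := by
    have h3 := mul_le_mul_of_nonneg_left (hx0 x1) hm.le
    have : (lam * e1) * T ≤ (lam * e1) * 1 := by
      change mu * e1 ≤ mu * T at h3
      linarith
    exact le_of_mul_le_mul_left this (by positivity)
  have he11 : e1 ≤ 1 := (hx0 x1).trans hT1
  refine ⟨fun x => (hx0 x).trans hT1, fun x => ?_, fun x => ?_⟩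
  · have h2 : lap (fun x => -N x) x2 ≤ 0 :=
      lap_nonpos_of_isLocalMax h.N_cd.contDiffAt.neg
        (Eventually.of_forall fun x => neg_le_neg (hx2 x))
    rw [lap_neg h.N_cd.contDiffAt, h.2.2.2.2.2.2 x2] at h2
    have he2 : 0 ≤ D.expu u x2 := expu_nonneg x2
    refine le_trans ?_ (hx2 x)
    have h3 : 0 ≤ lam * mu * (mu + lam) * D.expu u x2 := by positivity
    have h4 : 0 ≤ mu * (mu + lam * D.expu u x2) * N x2 := by linarith
    exact nonneg_of_mul_nonneg_right h4 (by positivity)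
  · refine (hx1 x).trans (le_of_mul_le_mul_left (a := mu + lam * e1) ?_ hpos1)
    refine h1'.trans ?_
    nlinarith [mul_le_mul_of_nonneg_left he11 (mul_pos hl hm).le]

lemma u_nonpos (h : IsMCSSolution D lam mu u N) (hl : 0 < lam) (hm : 0 < mu) {x : R2}
    (hx : x ∉ D.sing) : u x ≤ 0 := by
  have := (h.bounds hl hm).1 x
  rwa [expu_of_notMem hx, exp_le_one_iff] at this

end IsMCSSolution

/-- The unknown `w = -u` near `x0` in rescaled coordinates. -/
def wsc (lam : ℝ) (u : R2 → ℝ) (x0 y : R2) : ℝ := -u (x0 + lam⁻¹ • y)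

/-- The unknown `z = 1 - N/λ` near `x0` in rescaled coordinates. -/
def zsc (lam : ℝ) (N : R2 → ℝ) (x0 y : R2) : ℝ := 1 - lam⁻¹ * N (x0 + lam⁻¹ • y)

lemma IsMCSSolution.locSol (h : IsMCSSolution D lam mu u N) (hl : 0 < lam) (hm : 0 < mu)
    {x0 : R2} {U : Set R2} (hU : ∀ y ∈ U, x0 + lam⁻¹ • y ∉ D.sing) :
    LocSol (mu / lam) (wsc lam u x0) (zsc lam N x0) U := by
  have haff : ContDiff ℝ 2 fun y : R2 => x0 + lam⁻¹ • y := by fun_prop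
  obtain ⟨-, hN0, hN1⟩ := h.bounds hl hm
  refine ⟨fun y hy => ?_, fun y hy => ?_, fun y hy => ?_, fun y hy => ?_, fun y hy => ?_,
    fun y hy => ?_, fun y hy => ?_⟩
  · exact ((h.u_at (hU y hy)).comp y haff.contDiffAt).neg.contDiffWithinAt
  · exact (contDiff_const.sub (contDiff_const.mul (h.N_cd.comp haff))).contDiffAt.contDiffWithinAt
  · have e := lap_comp_affine (fun x => -u x) x0 lam⁻¹ y
    rw [lap_neg (h.u_at (hU y hy)), h.2.2.2.2.2.1 _ (hU y hy)] at e
    change lap (fun y => -u (x0 + lam⁻¹ • y)) y = _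
    rw [e]
    simp only [wsc, zsc, neg_neg]
    field_simp
    ring
  · have e := lap_comp_affine (fun x => 1 - lam⁻¹ * N x) x0 lam⁻¹ y
    rw [lap_sub contDiffAt_const (contDiffAt_const.mul h.N_cd.contDiffAt), lap_const,
      lap_const_mul _ h.N_cd.contDiffAt, h.2.2.2.2.2.2 _, expu_of_notMem (hU y hy)] at e
    change lap (fun y => 1 - lam⁻¹ * N (x0 + lam⁻¹ • y)) y = _
    rw [e]
    simp only [wsc, zsc, neg_neg]
    field_simp
    ring
  · have := h.u_nonpos hl hm (hU y hy)
    simp only [wsc]; linarith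
  · have := hN1 (x0 + lam⁻¹ • y)
    have h2 : lam⁻¹ * N (x0 + lam⁻¹ • y) ≤ lam⁻¹ * lam := by gcongr
    rw [inv_mul_cancel₀ hl.ne'] at h2
    simp only [zsc]; linarith
  · have := mul_nonneg (inv_nonneg.2 hl.le) (hN0 (x0 + lam⁻¹ • y))
    simp only [zsc]; linarith

/-- The energy density `λ eᵘ (λ - N) = -Δ(u + N/μ)`. -/
def energy (D : VortexData) (lam : ℝ) (u N : R2 → ℝ) (x : R2) : ℝ :=
  lam * D.expu u x * (lam - N x)

namespace IsMCSSolution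

lemma energy_continuous (h : IsMCSSolution D lam mu u N) : Continuous (energy D lam u N) :=
  (continuous_const.mul h.expu_continuous).mul (continuous_const.sub h.N_cd.continuous)

lemma energy_periodic (h : IsMCSSolution D lam mu u N) :
    Periodic2 D.a1 D.a2 (energy D lam u N) := fun x w hw => by
  simp only [energy, h.expu_periodic x w hw, h.2.1 x w hw]

lemma energy_nonneg (h : IsMCSSolution D lam mu u N) (hl : 0 < lam) (hm : 0 < mu) (x : R2) :
    0 ≤ energy D lam u N x :=
  mul_nonneg (mul_nonneg hl.le (expu_nonneg x)) (by linarith [(h.bounds hl hm).2.2 x])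

/-- The regular part of the difference of two solutions extends smoothly over the torus. -/
lemma exists_extension {lam' mu' : ℝ} {u' N' : R2 → ℝ} (h : IsMCSSolution D lam mu u N)
    (h' : IsMCSSolution D lam' mu' u' N') :
    ∃ v : R2 → ℝ, ContDiff ℝ 2 v ∧ Periodic2 D.a1 D.a2 v ∧
      ∀ x ∉ D.sing, v x = (u x + mu⁻¹ * N x) - (u' x + mu'⁻¹ * N' x) := by
  set f : R2 → ℝ := fun x => (u x + mu⁻¹ * N x) - (u' x + mu'⁻¹ * N' x) with hf
  set v : R2 → ℝ := fun x => limUnder (nhdsWithin x {x}ᶜ) f with hvdef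
  have hfC : ∀ x ∉ D.sing, ContDiffAt ℝ 2 f x := fun x hx =>
    ((h.u_at hx).add (contDiffAt_const.mul h.N_cd.contDiffAt)).sub
      ((h'.u_at hx).add (contDiffAt_const.mul h'.N_cd.contDiffAt))
  have hvf : ∀ x ∉ D.sing, v x = f x := fun x hx =>
    ((hfC x hx).continuousAt.tendsto.mono_left nhdsWithin_le_nhds).limUnder_eq
  have hC : ContDiff ℝ 2 v := by
    rw [contDiff_iff_contDiffAt]
    intro x
    by_cases hx : x ∈ D.sing
    · obtain ⟨r, hr, hiso⟩ := D.sing_isolated x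
      obtain ⟨i, w, hw, rfl⟩ := hx
      set s := D.p i + w
      obtain ⟨ε, hε, φ, hφ, huφ⟩ := h.log_structure i hw
      obtain ⟨ε', hε', φ', hφ', huφ'⟩ := h'.log_structure i hw
      set g : R2 → ℝ := fun x => (φ x + mu⁻¹ * N x) - (φ' x + mu'⁻¹ * N' x) with hg
      have hgC : ContDiffAt ℝ 2 g s :=
        ((hφ.contDiffAt (ball_mem_nhds _ hε)).add (contDiffAt_const.mul h.N_cd.contDiffAt)).sub
        ((hφ'.contDiffAt (ball_mem_nhds _ hε')).add (contDiffAt_const.mul h'.N_cd.contDiffAt))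
      have hfg : ∀ y ∈ ball s ε, y ∈ ball s ε' → y ≠ s → g y = f y := by
        intro y hy hy' hne
        simp only [hf, hg]
        rw [huφ y hy hne, huφ' y hy' hne]; ring
      refine hgC.congr_of_eventuallyEq ?_
      filter_upwards [ball_mem_nhds s hε, ball_mem_nhds s hε', ball_mem_nhds s hr] with y h1 h2 h3
      by_cases hys : y = s
      · rw [hys]
        refine Tendsto.limUnder_eq ?_
        refine (hgC.continuousAt.tendsto.mono_left nhdsWithin_le_nhds).congr' ?_
        filter_upwards [self_mem_nhdsWithin, mem_nhdsWithin_of_mem_nhds (ball_mem_nhds s hε),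
          mem_nhdsWithin_of_mem_nhds (ball_mem_nhds s hε')] with t h4 h5 h6
        exact hfg t h5 h6 h4
      · rw [hvf y fun hy => hys (hiso y hy h3), hfg y h1 h2 hys]
    · refine (hfC x hx).congr_of_eventuallyEq ?_
      filter_upwards [D.isOpen_sing_compl.mem_nhds hx] with y hy using hvf y hy
  refine ⟨v, hC, fun x w hw => ?_, hvf⟩
  have hdense : Dense D.singᶜ := D.countable_sing.dense_compl ℝ
  have heq : (fun x => v (x + w)) = v := by
    refine Continuous.ext_on hdense (hC.continuous.comp (by fun_prop)) hC.continuous fun y hy => ?_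
    rw [hvf y hy, hvf _ (mt (D.add_mem_sing hw).1 hy)]
    simp only [hf, h.1 y w hw, h.2.1 y w hw, h'.1 y w hw, h'.2.1 y w hw]
  exact congrFun heq x

lemma lap_regular (h : IsMCSSolution D lam mu u N) (hm : 0 < mu) {x : R2} (hx : x ∉ D.sing) :
    lap (fun x => u x + mu⁻¹ * N x) x = -energy D lam u N x := by
  rw [lap_add (h.u_at hx) (contDiffAt_const.mul h.N_cd.contDiffAt),
    lap_const_mul _ h.N_cd.contDiffAt, h.2.2.2.2.2.1 x hx, h.2.2.2.2.2.2 x, energy,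
    expu_of_notMem hx]
  field_simp
  ring

/-- Any two solutions with the same vortices have the same total energy. -/
lemma energy_eq {lam' mu' : ℝ} {u' N' : R2 → ℝ} (h : IsMCSSolution D lam mu u N)
    (h' : IsMCSSolution D lam' mu' u' N') (hm : 0 < mu) (hm' : 0 < mu') :
    ∫ x in D.F, energy D lam u N x = ∫ x in D.F, energy D lam' u' N' x := by
  obtain ⟨v, hv, hp, hvf⟩ := h.exists_extension h'
  have h0 := D.integral_lap_eq_zero hv hp
  have hlap : ∀ x ∉ D.sing, lap v x = energy D lam' u' N' x - energy D lam u N x := by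
    intro x hx
    have e : v =ᶠ[nhds x] fun x => (u x + mu⁻¹ * N x) - (u' x + mu'⁻¹ * N' x) := by
      filter_upwards [D.isOpen_sing_compl.mem_nhds hx] with y hy using hvf y hy
    rw [lap_congr e, lap_sub ((h.u_at hx).add (contDiffAt_const.mul h.N_cd.contDiffAt))
      ((h'.u_at hx).add (contDiffAt_const.mul h'.N_cd.contDiffAt)), h.lap_regular hm hx,
      h'.lap_regular hm' hx]
    ring
  have hae : ∀ᵐ x ∂(volume.restrict D.F), lap v x = energy D lam' u' N' x - energy D lam u N x := by
    refine ae_restrict_of_ae ?_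
    have : D.singᶜ ∈ ae (volume : Measure R2) :=
      compl_mem_ae_iff.2 (D.countable_sing.measure_zero _)
    filter_upwards [this] with x hx using hlap x hx
  rw [integral_congr_ae hae, integral_sub (D.integrableOn_F' h'.energy_continuous)
    (D.integrableOn_F' h.energy_continuous)] at h0
  linarith

end IsMCSSolution
end

/-! ### Passage from one point to compact sets -/

section
variable {D : VortexData}

open scoped Pointwise in
/-- The energy of the rescaled solution in a disc is at most the energy of one period cell. -/
lemma scaled_energy {lam mu r0 : ℝ} {u N : R2 → ℝ}
    (hr0 : ∀ f : R2 → ℝ, Continuous f → Periodic2 D.a1 D.a2 f →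
      (∀ x, 0 ≤ f x) → ∀ x r, r ≤ r0 → ∫ y in ball x r, f y ≤ ∫ y in D.F, f y)
    (h : IsMCSSolution D lam mu u N) (hl : 0 < lam) (hm : 0 < mu) {x : R2} {r : ℝ}
    (hr : r ≤ r0) (hx : ∀ y ∈ ball x r, y ∉ D.sing) :
    IntegrableOn (fun y => exp (-wsc lam u x y) * zsc lam N x y) (ball 0 (lam * r)) ∧
    ∫ y in ball (0:R2) (lam * r), exp (-wsc lam u x y) * zsc lam N x y
      ≤ ∫ y in D.F, energy D lam u N y := by
  have hmem : ∀ y ∈ ball (0:R2) (lam * r), x + lam⁻¹ • y ∈ ball x r := by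
    intro y hy
    rw [mem_ball_zero_iff] at hy
    rw [mem_ball, dist_eq_norm, add_sub_cancel_left, norm_smul, norm_inv, norm_of_nonneg hl.le,
      inv_mul_lt_iff₀ hl]
    exact hy
  have heq : EqOn (fun y => exp (-wsc lam u x y) * zsc lam N x y)
      (fun y => (lam ^ 2)⁻¹ * energy D lam u N (x + lam⁻¹ • y)) (ball 0 (lam * r)) := by
    intro y hy
    simp only [wsc, zsc, energy, neg_neg]
    rw [expu_of_notMem (hx _ (hmem y hy))]
    field_simp
  set g : R2 → ℝ := fun y => energy D lam u N (y + x) with hg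
  have hgc : Continuous g := h.energy_continuous.comp (by fun_prop)
  have hgp : Periodic2 D.a1 D.a2 g := fun y w hw => by
    have := h.energy_periodic (y + x) w hw
    simp only [hg]
    rwa [add_right_comm]
  constructor
  · refine IntegrableOn.congr_fun ?_ heq.symm measurableSet_ball
    have hc : Continuous fun y => (lam ^ 2)⁻¹ * energy D lam u N (x + lam⁻¹ • y) :=
      continuous_const.mul (h.energy_continuous.comp (by fun_prop))
    exact (hc.continuousOn.integrableOn_compact (isCompact_closedBall 0 (lam * r))).mono_set
      ball_subset_closedBall
  · rw [setIntegral_congr_fun measurableSet_ball heq, integral_const_mul]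
    have e1 : ∫ y in ball (0:R2) (lam * r), energy D lam u N (x + lam⁻¹ • y)
        = lam ^ 2 * ∫ y in ball (0:R2) r, g y := by
      have := Measure.setIntegral_comp_smul_of_pos volume g (ball (0:R2) (lam * r))
        (inv_pos.2 hl)
      rw [_root_.smul_ball (inv_ne_zero hl.ne'), smul_zero, norm_inv, norm_of_nonneg hl.le,
        inv_mul_cancel_left₀ hl.ne', finrank_euclideanSpace, Fintype.card_fin, inv_pow,
        inv_inv, smul_eq_mul] at this
      rw [← this]
      simp only [hg, add_comm]
    rw [e1, inv_mul_cancel_left₀ (by positivity), ← D.setIntegral_add h.energy_periodic x]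
    exact hr0 g hgc hgp (fun y => h.energy_nonneg hl hm _) 0 r hr

/-- Smallness of `-u` at the centre of a vortex-free disc, whose radius is large compared with
`1/λ`, spreads to a concentric disc with the same bound. -/
theorem propagation (D : VortexData) {E : ℝ} (hE : 0 ≤ E) :
    ∃ r0 > 0, ∃ ε₀ > 0, ∀ ε, 0 < ε → ε ≤ ε₀ → ∃ X₀ κ₀ : ℝ, ∀ (lam mu : ℝ) (u N : R2 → ℝ),
      IsMCSSolution D lam mu u N → 0 < lam → 0 < mu → κ₀ ≤ mu / lam →
      ∫ x in D.F, energy D lam u N x = E →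
      ∀ x r, r ≤ r0 → X₀ ≤ lam * r → (∀ y ∈ ball x r, y ∉ D.sing) → -u x ≤ ε →
        ∀ y ∈ ball x (r / 16), -u y ≤ ε := by
  obtain ⟨r0, hr0, hF⟩ := D.exists_radius
  obtain ⟨ε₀, hε₀, hloc⟩ := local_expand hE
  refine ⟨r0, hr0, ε₀, hε₀, fun ε hε hεle => ?_⟩
  obtain ⟨X₀, κ₀, hX⟩ := hloc ε hε hεle
  refine ⟨X₀, κ₀, fun lam mu u N h hl hm hκ hEn x r hr hXr hx hux y hy => ?_⟩
  obtain ⟨hi, hle⟩ := scaled_energy hF h hl hm hr hx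
  have hsol : LocSol (mu / lam) (wsc lam u x) (zsc lam N x) (ball 0 (lam * r)) := by
    refine h.locSol hl hm fun y hy => hx _ ?_
    rw [mem_ball_zero_iff] at hy
    rwa [mem_ball, dist_eq_norm, add_sub_cancel_left, norm_smul, norm_inv, norm_of_nonneg hl.le,
      inv_mul_lt_iff₀ hl]
  have := hX (lam * r) (mu / lam) hXr hκ _ _ hsol hi (hEn ▸ hle)
    (by simpa [wsc] using hux) (lam • (y - x)) (by
      rw [mem_ball_zero_iff, norm_smul, norm_of_nonneg hl.le, mul_div_assoc]
      rw [mem_ball, dist_eq_norm] at hy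
      gcongr)
  rw [wsc, smul_smul, inv_mul_cancel₀ hl.ne', one_smul, add_sub_cancel] at this
  exact this

/-- At a bounded rescaled distance from a vortex, `-u` stays away from `0`. -/
lemma vortex_bound {lam mu L ρ : ℝ} {u N : R2 → ℝ} {s x : R2} (hs : s ∈ D.sing)
    (hρ : ∀ s' ∈ D.sing, dist s' s < ρ → s' = s)
    (h : IsMCSSolution D lam mu u N) (hl : 0 < lam) (hm : 0 < mu) (hκ : 1 ≤ mu / lam)
    (hL : 1 ≤ L) (hρL : 2 * L < lam * ρ) (hxs : x ≠ s) (hx : lam * dist x s ≤ L) :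
    vortexBound L ≤ -u x + 2 * (mu / lam)⁻¹ := by
  obtain ⟨i, w, hw, rfl⟩ := hs
  set s := D.p i + w
  obtain ⟨ε, hε, v, hv, huv⟩ := h.log_structure i hw
  have hsol : LocSol (mu / lam) (wsc lam u s) (zsc lam N s) (ball 0 (lam * ρ) \ {0}) := by
    refine h.locSol hl hm fun y hy hys => hy.2 ?_
    have := hρ _ hys (by
      have := mem_ball_zero_iff.1 hy.1
      rwa [dist_eq_norm, add_sub_cancel_left, norm_smul, norm_inv, norm_of_nonneg hl.le,
        inv_mul_lt_iff₀ hl])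
    rw [add_eq_left, smul_eq_zero] at this
    exact this.resolve_left (inv_ne_zero hl.ne')
  have hc : (2:ℝ) ≤ 2 * (D.m i : ℝ) := by
    have : (1:ℝ) ≤ D.m i := by exact_mod_cast D.m_pos i
    linarith
  have := near_vortex hsol hκ hL hρL (mul_pos hl hε) hc
    (v := fun y => -v (s + lam⁻¹ • y) + 2 * (D.m i : ℝ) * Real.log lam) (by
      have h1 : ContinuousAt v (s + lam⁻¹ • (0:R2)) := by
        rw [smul_zero, add_zero]
        exact (hv.contDiffAt (ball_mem_nhds _ hε)).continuousAt
      have h2 : ContinuousAt (fun y : R2 => s + lam⁻¹ • y) 0 := by fun_prop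
      exact ((h1.comp (f := fun y : R2 => s + lam⁻¹ • y) h2).neg).add continuousAt_const)
    (fun y hy0 hy => by
      have e1 : ‖s + lam⁻¹ • y - s‖ = lam⁻¹ * ‖y‖ := by
        rw [add_sub_cancel_left, norm_smul, norm_inv, norm_of_nonneg hl.le]
      rw [wsc, huv (s + lam⁻¹ • y), e1, Real.log_mul (inv_ne_zero hl.ne') (norm_ne_zero_iff.2 hy0),
        Real.log_inv]
      · ring
      · rw [mem_ball, dist_eq_norm, e1, inv_mul_lt_iff₀ hl]; exact hy
      · rw [Ne, add_eq_left, smul_eq_zero]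
        exact fun h => h.elim (inv_ne_zero hl.ne') hy0)
    (y := lam • (x - s)) (smul_ne_zero hl.ne' (sub_ne_zero.2 hxs)) (by
      rwa [norm_smul, norm_of_nonneg hl.le, ← dist_eq_norm])
  rwa [wsc, smul_smul, inv_mul_cancel₀ hl.ne', one_smul, add_sub_cancel] at this

/-- The propagation property for one function `u`, at height `ε` and scale `X / λ`. -/
def Spreads (D : VortexData) (r0 X ε lam : ℝ) (u : R2 → ℝ) : Prop :=
  ∀ x r, r ≤ r0 → X ≤ lam * r → (∀ y ∈ ball x r, y ∉ D.sing) → -u x ≤ ε →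
    ∀ y ∈ ball x (r / 16), -u y ≤ ε

variable {ι : Type*} {l : Filter ι} {lam : ι → ℝ} {u : ι → R2 → ℝ} {x : ι → R2} {r0 X ε : ℝ}

/-- Chains of discs carry smallness from one limit point to every compact set free of
singular points, since the complement of the singular set is connected. -/
lemma spread_compact [l.NeBot] (hr0 : 0 < r0)
    (hS : ∀ᶠ k in l, Spreads D r0 X ε (lam k) (u k)) (hlam : Tendsto lam l atTop) {x0 : R2}
    (hx : Tendsto x l (nhds x0)) (hx0 : x0 ∉ D.sing) (hux : ∀ᶠ k in l, -u k (x k) ≤ ε)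
    {K : Set R2} (hK : IsCompact K) (hKs : K ∩ D.sing = ∅) :
    ∀ᶠ k in l, ∀ y ∈ K, -u k y ≤ ε := by
  set G : Set R2 := {x | ∃ ρ > 0, ∀ᶠ k in l, ∀ y ∈ ball x ρ, -u k y ≤ ε} with hG
  -- smallness along points `z k` close to `g` reaches a fixed disc around `g`
  have key : ∀ g ∉ D.sing, ∃ ρ > 0, ∀ z : ι → R2, (∀ᶠ k in l, z k ∈ ball g ρ) →
      (∀ᶠ k in l, -u k (z k) ≤ ε) → g ∈ G := by
    intro g hg
    obtain ⟨r, hr, hsub⟩ := Metric.isOpen_iff.1 D.isOpen_sing_compl g hg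
    set r' := min r0 (r / 2) with hr'
    have hr'pos : 0 < r' := by positivity
    refine ⟨r' / 32, by positivity, fun z hz hzu => ⟨r' / 32, by positivity, ?_⟩⟩
    filter_upwards [hz, hzu, hS, hlam.eventually_ge_atTop (X / r')] with k h1 h2 h3 h4 y hy
    rw [div_le_iff₀ hr'pos] at h4
    rw [mem_ball] at h1 hy
    refine h3 (z k) r' (min_le_left _ _) h4 (fun t ht => hsub ?_) h2 y ?_
    · rw [mem_ball] at *
      have : r' ≤ r / 2 := min_le_right _ _
      linarith [dist_triangle t (z k) g]
    · rw [mem_ball]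
      linarith [dist_triangle y g (z k), dist_comm g (z k)]
  have hx0G : x0 ∈ G := by
    obtain ⟨ρ, hρ, hk⟩ := key x0 hx0
    exact hk x (hx (ball_mem_nhds _ hρ)) hux
  have hGopen : IsOpen G := by
    refine Metric.isOpen_iff.2 fun g ⟨ρ, hρ, hg⟩ => ⟨ρ / 2, by positivity, fun y hy => ?_⟩
    refine ⟨ρ / 2, by positivity, hg.mono fun k hk t ht => hk t ?_⟩
    rw [mem_ball] at *
    linarith [dist_triangle t y g]
  have hsub : D.singᶜ ⊆ G := by
    refine D.isConnected_sing_compl.isPreconnected.subset_of_closure_inter_subset hGopen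
      ⟨x0, hx0, hx0G⟩ ?_
    rintro g ⟨hgc, hg⟩
    obtain ⟨ρ, hρ, hk⟩ := key g hg
    obtain ⟨y, ⟨ρ', hρ', hy⟩, hgy⟩ := Metric.mem_closure_iff.1 hgc ρ hρ
    refine hk (fun _ => y) (Eventually.of_forall fun _ => ?_)
      (hy.mono fun k h => h y (mem_ball_self hρ'))
    rwa [mem_ball, dist_comm]
  refine hK.induction_on (p := fun K => ∀ᶠ k in l, ∀ y ∈ K, -u k y ≤ ε) ?_ ?_ ?_ ?_
  · simp
  · intro s t hst ht
    exact ht.mono fun k hk y hy => hk y (hst hy)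
  · intro s t hs ht
    filter_upwards [hs, ht] with k h1 h2 y hy
    exact hy.elim (h1 y) (h2 y)
  · intro y hy
    obtain ⟨ρ, hρ, hg⟩ := hsub (fun hs => (hKs ▸ (⟨hy, hs⟩ : y ∈ K ∩ D.sing) : y ∈ (∅ : Set R2)))
    exact ⟨ball y ρ, mem_nhdsWithin_of_mem_nhds (ball_mem_nhds _ hρ), hg⟩

/-- Smallness near a vortex, at a distance much larger than `1/λ`, is carried radially
outwards to a fixed circle by discs whose radius is their distance to the vortex. -/
lemma radial_spread {lam : ℝ} {u : R2 → ℝ} {s x : R2} {ρ : ℝ} (hl : 0 < lam)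
    (hS : Spreads D r0 X ε lam u)
    (hρ : ∀ s' ∈ D.sing, dist s' s < 3 * ρ → s' = s) (hρ0 : ρ ≤ r0) (hxs : x ≠ s)
    (hX : X ≤ lam * dist x s) (hxρ : dist x s ≤ ρ) (hux : -u x ≤ ε) :
    ∃ y ∈ sphere s ρ, -u y ≤ ε := by
  set d := dist x s with hd
  have hdpos : 0 < d := dist_pos.2 hxs
  set θ : R2 := d⁻¹ • (x - s) with hθ
  have hθ1 : ‖θ‖ = 1 := by
    rw [hθ, norm_smul, norm_inv, norm_of_nonneg hdpos.le, ← dist_eq_norm,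
      inv_mul_cancel₀ hdpos.ne']
  have hdist : ∀ t t' : ℝ, dist (s + t • θ) (s + t' • θ) = |t - t'| := by
    intro t t'
    rw [dist_eq_norm, add_sub_add_left_eq_sub, ← sub_smul, norm_smul, hθ1, mul_one,
      Real.norm_eq_abs]
  have hstep : ∀ t t', d ≤ t → t ≤ ρ → |t' - t| < t / 16 → -u (s + t • θ) ≤ ε →
      -u (s + t' • θ) ≤ ε := by
    intro t t' ht htρ htt' hu
    refine hS (s + t • θ) t (htρ.trans hρ0)
      (hX.trans (mul_le_mul_of_nonneg_left ht hl.le)) (fun y hy hys => ?_) hu _ ?_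
    · have e : dist (s + t • θ) s = t := by
        have := hdist t 0
        rwa [zero_smul, add_zero, sub_zero, abs_of_nonneg (hdpos.le.trans ht)] at this
      rw [mem_ball] at hy
      have := hρ y hys (by linarith [dist_triangle y (s + t • θ) s])
      rw [this, dist_comm, e] at hy
      exact lt_irrefl _ hy
    · rwa [mem_ball, hdist]
  have hind : ∀ n : ℕ, ∀ t, d ≤ t → t ≤ ρ → t ≤ d * (33 / 32) ^ n → -u (s + t • θ) ≤ ε := by
    intro n
    induction n with
    | zero =>
      intro t h1 _ h3
      have : t = d := le_antisymm (by simpa using h3) h1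
      rw [this, hθ, smul_inv_smul₀ hdpos.ne', add_sub_cancel]
      exact hux
    | succ n ih =>
      intro t h1 h2 h3
      have htpos : 0 < t := hdpos.trans_le h1
      have hle : max d (t * (32 / 33)) ≤ t := max_le h1 (by linarith)
      refine hstep (max d (t * (32 / 33))) t (le_max_left _ _) (hle.trans h2) ?_
        (ih _ (le_max_left _ _) (hle.trans h2) (max_le ?_ ?_))
      · rw [abs_of_nonneg (by linarith)]
        linarith [le_max_right d (t * (32 / 33))]
      · exact le_mul_of_one_le_right hdpos.le (one_le_pow₀ (by norm_num))
      · rw [pow_succ] at h3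
        linarith
  obtain ⟨n, hn⟩ := pow_unbounded_of_one_lt (ρ / d) (by norm_num : (1:ℝ) < 33 / 32)
  rw [div_lt_iff₀ hdpos, mul_comm] at hn
  refine ⟨s + ρ • θ, ?_, hind n ρ hxρ le_rfl hn.le⟩
  rw [mem_sphere, dist_eq_norm, add_sub_cancel_left, norm_smul, hθ1, mul_one,
    norm_of_nonneg (hdpos.le.trans hxρ)]

end

/-- Points of the cell, away from the vortices, at which `u` almost attains `inf |u|`. -/
lemma exists_almost_min (D : VortexData) (u : R2 → ℝ) {η : ℝ} (hη : 0 < η) :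
    ∃ x ∈ D.F, x ∉ D.sing ∧
      |u x| < (⨅ x : ↥(cell D.a1 D.a2 \ Set.range D.p), |u (x : R2)|) + η := by
  have hne : Nonempty ↥(cell D.a1 D.a2 \ Set.range D.p) := by
    have hc : (1/2 : ℝ) • D.a1 + (1/2 : ℝ) • D.a2 ∈ cell D.a1 D.a2 :=
      ⟨1/2, 1/2, by norm_num, by norm_num, rfl⟩
    obtain ⟨y, hy, hys⟩ := (D.countable_sing.dense_compl ℝ).inter_open_nonempty _
      D.isOpen_cell ⟨_, hc⟩
    refine ⟨y, hy, ?_⟩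
    rintro ⟨i, rfl⟩
    exact hys ⟨i, 0, D.lattice_zero, (add_zero _).symm⟩
  obtain ⟨⟨x, hx⟩, hxu⟩ := exists_lt_of_ciInf_lt (lt_add_of_pos_right
    (⨅ x : ↥(cell D.a1 D.a2 \ Set.range D.p), |u (x : R2)|) hη)
  exact ⟨x, D.cell_subset_F hx.1, fun hs => hx.2 (D.cell_inter_sing hx.1 hs), hxu⟩

/-- The conclusion at a fixed small height `ε`. -/
lemma eventually_small (D : VortexData) (lam mu : ℕ → ℝ)
    (hlam_pos : ∀ k, 0 < lam k) (hmu_pos : ∀ k, 0 < mu k)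
    (hlam : Tendsto lam atTop atTop)
    (hratio : Tendsto (fun k => mu k / lam k) atTop atTop)
    (u N : ℕ → R2 → ℝ)
    (hsol : ∀ k, IsMCSSolution D (lam k) (mu k) (u k) (N k))
    (hinf : Tendsto (fun k => ⨅ x : ↥(cell D.a1 D.a2 \ Set.range D.p), |u k (x : R2)|)
      atTop (nhds 0)) :
    ∃ ε₀ > 0, ∀ ε, 0 < ε → ε ≤ ε₀ → ∀ K : Set R2, IsCompact K → K ∩ D.sing = ∅ →
      ∀ᶠ k in atTop, ∀ y ∈ K, -u k y ≤ ε := by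
  have hEk : ∀ k, ∫ x in D.F, energy D (lam k) (u k) (N k) x =
      ∫ x in D.F, energy D (lam 0) (u 0) (N 0) x := fun k =>
    (hsol k).energy_eq (hsol 0) (hmu_pos k) (hmu_pos 0)
  obtain ⟨r0, hr0, ε₀, hε₀, hprop⟩ := propagation D
    (E := ∫ x in D.F, energy D (lam 0) (u 0) (N 0) x)
    (integral_nonneg fun x => (hsol 0).energy_nonneg (hlam_pos 0) (hmu_pos 0) x)
  refine ⟨ε₀, hε₀, fun ε hε hεle K hK hKs => ?_⟩
  obtain ⟨X, κ₀, hX⟩ := hprop ε hε hεle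
  have hS : ∀ᶠ k in atTop, Spreads D r0 X ε (lam k) (u k) := by
    filter_upwards [hratio.eventually_ge_atTop κ₀] with k hk
    exact hX _ _ _ _ (hsol k) (hlam_pos k) (hmu_pos k) hk (hEk k)
  choose x hxF hxs hxu using fun k : ℕ => exists_almost_min D (u k) (Nat.one_div_pos_of_nat (n := k))
  have hux : Tendsto (fun k => |u k (x k)|) atTop (nhds 0) := by
    refine squeeze_zero (fun k => abs_nonneg _) (fun k => (hxu k).le) ?_
    simpa using hinf.add tendsto_one_div_add_atTop_nhds_zero_nat
  have hux' : ∀ᶠ k in atTop, -u k (x k) ≤ ε := by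
    filter_upwards [hux.eventually_le_const hε] with k hk using (neg_le_abs _).trans hk
  -- it suffices to argue along an ultrafilter, where the base points converge
  refine mem_iff_ultrafilter.2 fun 𝒰 h𝒰 => ?_
  have hcl : IsCompact (closure D.F) := D.isBounded_F.isCompact_closure
  obtain ⟨x0, -, hx0⟩ := hcl.ultrafilter_le_nhds (𝒰.map x) (le_principal_iff.2
    (Ultrafilter.mem_map.2 (Eventually.of_forall fun k => subset_closure (hxF k))))
  have hx0' : Tendsto x 𝒰 (nhds x0) := hx0
  by_cases hsing : x0 ∈ D.sing
  swap
  · exact spread_compact hr0 (hS.filter_mono h𝒰) (hlam.mono_left h𝒰) hx0' hsing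
      (hux'.filter_mono h𝒰) hK hKs
  obtain ⟨r, hr, hiso⟩ := D.sing_isolated x0
  set ρ := min r0 (r / 3) with hρ
  have hρpos : 0 < ρ := by positivity
  have hρ3 : 3 * ρ ≤ r := by have := min_le_right r0 (r / 3); linarith
  have hne : ∀ k, x k ≠ x0 := fun k he => hxs k (by rw [he]; exact hsing)
  -- near a vortex the base points are at distance much larger than `1/λ`
  have hfar : ∀ᶠ k in atTop, X ≤ lam k * dist (x k) x0 := by
    set L := max X 1
    have hL : 0 < L := lt_of_lt_of_le one_pos (le_max_right X 1)
    have hlim : Tendsto (fun k => |u k (x k)| + 2 * (mu k / lam k)⁻¹) atTop (nhds 0) := by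
      simpa using hux.add (hratio.inv_tendsto_atTop.const_mul 2)
    filter_upwards [hlim.eventually_lt_const (vortexBound_pos hL),
      hratio.eventually_ge_atTop 1, hlam.eventually_gt_atTop (2 * L / r)] with k h1 h2 h3
    by_contra hcon
    rw [div_lt_iff₀ hr] at h3
    have := vortex_bound hsing hiso (hsol k) (hlam_pos k) (hmu_pos k) h2 (le_max_right X 1) h3
      (hne k) ((not_le.1 hcon).le.trans (le_max_left X 1))
    linarith [neg_le_abs (u k (x k))]
  have hclose : ∀ᶠ k in (𝒰 : Filter ℕ), dist (x k) x0 ≤ ρ := by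
    filter_upwards [hx0' (ball_mem_nhds x0 hρpos)] with k hk using (mem_ball.1 hk).le
  have hex : ∀ᶠ k in (𝒰 : Filter ℕ), ∃ y ∈ sphere x0 ρ, -u k y ≤ ε := by
    filter_upwards [hclose, hfar.filter_mono h𝒰, hS.filter_mono h𝒰, hux'.filter_mono h𝒰]
      with k h1 h2 h3 h4
    exact radial_spread (hlam_pos k) h3 (fun s' hs' h => hiso s' hs' (h.trans_le hρ3))
      (min_le_left _ _) (hne k) h2 h1 h4
  obtain ⟨x', hx'⟩ := hex.choice
  obtain ⟨x1, hx1s, hx1⟩ := (isCompact_sphere x0 ρ).ultrafilter_le_nhds (𝒰.map x')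
    (le_principal_iff.2 (Ultrafilter.mem_map.2 (hx'.mono fun k h => h.1)))
  have hx1n : x1 ∉ D.sing := by
    intro h
    rw [mem_sphere] at hx1s
    have := hiso x1 h (by linarith)
    rw [this, dist_self] at hx1s
    exact hρpos.ne hx1s
  exact spread_compact hr0 (hS.filter_mono h𝒰) (hlam.mono_left h𝒰) hx1 hx1n
    (hx'.mono fun k h => h.2) hK hKs

/-- if `inf_{Ω ∖ Z} |uₖ| → 0` then `uₖ → 0` uniformly on every compact set
avoiding `Z + Λ`. -/
theorem stmt5 (D : VortexData) (lam mu : ℕ → ℝ)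
    (hlam_pos : ∀ k, 0 < lam k) (hmu_pos : ∀ k, 0 < mu k)
    (hlam : Tendsto lam atTop atTop)
    (hratio : Tendsto (fun k => mu k / lam k) atTop atTop)
    (u N : ℕ → R2 → ℝ)
    (hsol : ∀ k, IsMCSSolution D (lam k) (mu k) (u k) (N k))
    (hinf : Tendsto (fun k => ⨅ x : ↥(cell D.a1 D.a2 \ Set.range D.p), |u k (x : R2)|)
      atTop (nhds 0)) :
    ∀ K : Set R2, IsCompact K → K ∩ D.sing = ∅ →
      Tendsto (fun k => ⨆ x : K, |u k (x : R2)|) atTop (nhds 0) := by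
  intro K hK hKs
  obtain ⟨ε₀, hε₀, h⟩ := eventually_small D lam mu hlam_pos hmu_pos hlam hratio u N hsol hinf
  refine tendsto_order.2 ⟨fun a ha => Eventually.of_forall fun k =>
    ha.trans_le (Real.iSup_nonneg fun x => abs_nonneg _), fun a ha => ?_⟩
  have hpos : 0 < min ε₀ (a / 2) := by positivity
  filter_upwards [h _ hpos (min_le_left _ _) K hK hKs] with k hk
  refine lt_of_le_of_lt (Real.iSup_le (fun x => ?_) hpos.le)
    ((min_le_right ε₀ (a / 2)).trans_lt (by linarith))
  have hx : (x : R2) ∉ D.sing := fun hs =>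
    (hKs ▸ (⟨x.2, hs⟩ : (x : R2) ∈ K ∩ D.sing) : (x : R2) ∈ (∅ : Set R2))
  rw [abs_of_nonpos ((hsol k).u_nonpos (hlam_pos k) (hmu_pos k) hx)]
  exact hk x x.2

end
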